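/- The set of real numbers r with 0 < r < 1 such that there exists a compact packing of the Euclidean plane by disks of radii 1 and r in which both radii are actually used has exactly 9 elements. -/

import Mathlib

open Metric Set

noncomputable section

/-- The Euclidean plane. -/
abbrev Plane : Type := EuclideanSpace ℝ (Fin 2)

/-- A closed disk in the plane, given by its center and (positive) radius. -/
structure Disk where
  center : Plane
  radius : ℝ
  radius_pos : 0 < radius

/-- The set of points of a disk (a closed ball). -/
def Disk.set (d : Disk) : Set Plane := closedBall d.center d.radius

/-- A packing: a family of closed disks with pairwise disjoint interiors. -/
def IsPacking (P : Set Disk) : Prop :=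
  ∀ d ∈ P, ∀ d' ∈ P, d ≠ d' → Disjoint (interior d.set) (interior d'.set)

/-- Two disks are (externally) tangent: they intersect in exactly one point. -/
def Disk.Tangent (d d' : Disk) : Prop :=
  dist d.center d'.center = d.radius + d'.radius

/-- The union of the disks of a packing. -/
def packingUnion (P : Set Disk) : Set Plane := ⋃ d ∈ P, d.set

/-- A packing is compact (triangulated) if every connected component of the
complement of the union of the disks is bounded and its closure meets exactly
three of the disks, these three disks being pairwise tangent. -/
def IsCompactPacking (P : Set Disk) : Prop :=
  IsPacking P ∧
  ∀ x ∈ (packingUnion P)ᶜ,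
    Bornology.IsBounded (connectedComponentIn (packingUnion P)ᶜ x) ∧
    ∃ d₁ d₂ d₃ : Disk, d₁ ∈ P ∧ d₂ ∈ P ∧ d₃ ∈ P ∧
      d₁ ≠ d₂ ∧ d₁ ≠ d₃ ∧ d₂ ≠ d₃ ∧
      d₁.Tangent d₂ ∧ d₁.Tangent d₃ ∧ d₂.Tangent d₃ ∧
      {d ∈ P | (closure (connectedComponentIn (packingUnion P)ᶜ x) ∩ d.set).Nonempty}
        = {d₁, d₂, d₃}

/-- A packing uses the radius `r` if one of its disks has radius `r`. -/
def UsesRadius (P : Set Disk) (r : ℝ) : Prop := ∃ d ∈ P, d.radius = r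

/-- All radii of the disks of `P` belong to `S`. -/
def RadiiIn (P : Set Disk) (S : Set ℝ) : Prop := ∀ d ∈ P, d.radius ∈ S

/-- The square `[-r, r]²`. -/
def square (r : ℝ) : Set Plane := {x | |x 0| ≤ r ∧ |x 1| ≤ r}

/-- The density of a packing: the limsup, as `r → ∞`, of the proportion of the
square `[-r, r]²` covered by the disks. -/
def density (P : Set Disk) : ℝ :=
  Filter.limsup
    (fun r : ℝ => (MeasureTheory.volume (packingUnion P ∩ square r)).toReal / (4 * r ^ 2))
    Filter.atTop

end

/-- metric form of the packing condition -/
def DSep (P : Set Disk) : Prop :=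
  ∀ d ∈ P, ∀ d' ∈ P, d ≠ d' → d.radius + d'.radius ≤ dist d.center d'.center

/-- radii lie between `r` and `1` -/
def Rad (P : Set Disk) (r : ℝ) : Prop := ∀ d ∈ P, r ≤ d.radius ∧ d.radius ≤ 1

lemma isPacking_iff_sep (P : Set Disk) : IsPacking P ↔ DSep P := by
  have key : ∀ d d' : Disk, Disjoint (interior d.set) (interior d'.set) ↔
      d.radius + d'.radius ≤ dist d.center d'.center := by
    intro d d'
    unfold Disk.set
    rw [interior_closedBall _ d.radius_pos.ne', interior_closedBall _ d'.radius_pos.ne',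
      disjoint_ball_ball_iff d.radius_pos d'.radius_pos]
  unfold IsPacking DSep
  simp only [key]

lemma finite_near {P : Set Disk} {r : ℝ} (hr : 0 < r) (hS : DSep P) (hR : Rad P r)
    (x : Plane) (K : ℝ) : {d ∈ P | dist d.center x ≤ K}.Finite := by
  have hc : TotallyBounded (closedBall x K) := (isCompact_closedBall x K).totallyBounded
  obtain ⟨t, ht, hcov⟩ := Metric.totallyBounded_iff.1 hc r hr
  choose! f hf using fun (d : Disk) (hd : d ∈ {d ∈ P | dist d.center x ≤ K}) =>
    (by simpa using hcov (show d.center ∈ closedBall x K from hd.2) :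
      ∃ y ∈ t, dist d.center y < r)
  refine Set.Finite.of_finite_image (f := f) (ht.subset ?_) ?_
  · rintro _ ⟨d, hd, rfl⟩
    exact (hf d hd).1
  · intro d hd d' hd' h
    by_contra hne
    have h1 := hS d hd.1 d' hd'.1 hne
    have h2 := (hf d hd).2
    have h3 := (hf d' hd').2
    rw [← h] at h3
    have h4 := dist_triangle_right d.center d'.center (f d)
    have := (hR d hd.1).1
    have := (hR d' hd'.1).1
    linarith

lemma closed_union {P : Set Disk} {r : ℝ} (hr : 0 < r) (hS : DSep P) (hR : Rad P r)
    {Q : Set Disk} (hQ : Q ⊆ P) : IsClosed (packingUnion Q) := by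
  unfold packingUnion
  rw [biUnion_eq_iUnion]
  refine LocallyFinite.isClosed_iUnion ?_ (fun d => isClosed_closedBall)
  intro x
  refine ⟨ball x 1, ball_mem_nhds x one_pos, ?_⟩
  have hf := finite_near hr hS hR x 2
  refine Set.Finite.of_finite_image (f := Subtype.val) (hf.subset ?_) Subtype.val_injective.injOn
  rintro _ ⟨d, ⟨y, hy, hyx⟩, rfl⟩
  refine ⟨hQ d.2, ?_⟩
  have h1 : dist y d.1.center ≤ d.1.radius := hy
  have h2 : dist y x < 1 := hyx
  have := (hR d.1 (hQ d.2)).2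
  have := dist_triangle_left d.1.center x y
  linarith

lemma mem_union {P : Set Disk} {y : Plane} :
    y ∈ packingUnion P ↔ ∃ d ∈ P, dist y d.center ≤ d.radius := by
  unfold packingUnion Disk.set
  simp

lemma comp_open {P : Set Disk} (hcl : IsClosed (packingUnion P)) (x : Plane) :
    IsOpen (connectedComponentIn (packingUnion P)ᶜ x) :=
  hcl.isOpen_compl.connectedComponentIn

/-- points in the closure of a component that are not in the component are in the union -/
lemma closure_comp {P : Set Disk} (hcl : IsClosed (packingUnion P)) (x y : Plane)
    (hy : y ∈ closure (connectedComponentIn (packingUnion P)ᶜ x))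
    (hy' : y ∉ packingUnion P) : y ∈ connectedComponentIn (packingUnion P)ᶜ x := by
  have h1 : IsOpen (connectedComponentIn (packingUnion P)ᶜ y) := comp_open hcl y
  have h2 : y ∈ connectedComponentIn (packingUnion P)ᶜ y := mem_connectedComponentIn hy'
  obtain ⟨z, hz1, hz2⟩ := mem_closure_iff.1 hy _ h1 h2
  rw [connectedComponentIn_eq hz2, ← connectedComponentIn_eq hz1]
  exact h2

lemma escape {P : Set Disk} (hcl : IsClosed (packingUnion P)) (x : Plane) (K : Set Plane)
    (hK : IsPreconnected K) (hne : (K ∩ connectedComponentIn (packingUnion P)ᶜ x).Nonempty)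
    (hav : ∀ d ∈ P, (closure (connectedComponentIn (packingUnion P)ᶜ x) ∩ d.set).Nonempty →
      ∀ y ∈ K, y ∉ d.set) : K ⊆ connectedComponentIn (packingUnion P)ᶜ x := by
  refine hK.subset_of_closure_inter_subset (comp_open hcl x) hne ?_
  rintro y ⟨hy, hyK⟩
  refine closure_comp hcl x y hy ?_
  intro hyP
  obtain ⟨d, hd, hyd⟩ := mem_union.1 hyP
  exact hav d hd ⟨y, hy, hyd⟩ y hyK hyd

noncomputable section

/-- unit vector in direction `θ` -/
def ev (θ : ℝ) : Plane := !₂[Real.cos θ, Real.sin θ]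

lemma ev_cont : Continuous ev := by
  unfold ev
  fun_prop

lemma dist_sq (x y : Plane) : dist x y ^ 2 = (x 0 - y 0) ^ 2 + (x 1 - y 1) ^ 2 := by
  rw [EuclideanSpace.dist_eq, Real.sq_sqrt (by positivity)]
  simp [Fin.sum_univ_two, Real.dist_eq, sq_abs]

lemma dist_polar_sq (c : Plane) (a b θ φ : ℝ) :
    dist (c + a • ev θ) (c + b • ev φ) ^ 2 = a ^ 2 + b ^ 2 - 2 * a * b * Real.cos (φ - θ) := by
  rw [dist_sq, Real.cos_sub]
  simp [ev]
  have h1 := Real.sin_sq_add_cos_sq θ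
  have h2 := Real.sin_sq_add_cos_sq φ
  linear_combination a ^ 2 * h1 + b ^ 2 * h2

lemma dist_center_polar (c : Plane) {a : ℝ} (ha : 0 ≤ a) (θ : ℝ) : dist (c + a • ev θ) c = a := by
  have := dist_polar_sq c a 0 θ θ
  simp only [zero_smul, add_zero] at this
  have h : dist (c + a • ev θ) c ^ 2 = a ^ 2 := by rw [this]; ring
  exact (sq_eq_sq₀ dist_nonneg ha).1 h

lemma exists_polar (c x : Plane) {a : ℝ} (ha : 0 < a) (h : dist x c = a) :
    ∃ θ, x = c + a • ev θ := by
  have h1 := dist_sq x c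
  rw [h] at h1
  set z : ℂ := ⟨x 0 - c 0, x 1 - c 1⟩ with hz
  have hn : ‖z‖ = a := by
    rw [← sq_eq_sq₀ (norm_nonneg _) ha.le, Complex.sq_norm, Complex.normSq_apply, h1]
    simp [hz]; ring
  refine ⟨z.arg, ?_⟩
  have hc := Complex.norm_mul_cos_arg z
  have hs := Complex.norm_mul_sin_arg z
  rw [hn] at hc hs
  ext i
  fin_cases i
  · have : a * Real.cos z.arg = x 0 - c 0 := hc
    change x 0 = c 0 + a * Real.cos z.arg
    linarith
  · have : a * Real.sin z.arg = x 1 - c 1 := hs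
    change x 1 = c 1 + a * Real.sin z.arg
    linarith

/-- `d` is a disk of `P` tangent to `s` in direction `θ` -/
def Nb (P : Set Disk) (s : Disk) (θ : ℝ) (d : Disk) : Prop :=
  d ∈ P ∧ d.center = s.center + (s.radius + d.radius) • ev θ

lemma Nb.of_tangent {P : Set Disk} {s d : Disk} (hd : d ∈ P) (h : s.Tangent d) :
    ∃ θ, Nb P s θ d := by
  have hp := s.radius_pos
  have hp' := d.radius_pos
  obtain ⟨θ, h⟩ := exists_polar s.center d.center (by linarith) ((dist_comm _ _).trans h)
  exact ⟨θ, hd, h⟩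

lemma Nb.tangent {P : Set Disk} {s d : Disk} {θ : ℝ} (h : Nb P s θ d) : s.Tangent d := by
  have hp := s.radius_pos
  have hp' := d.radius_pos
  unfold Disk.Tangent
  rw [h.2, dist_comm, dist_center_polar _ (by linarith)]

lemma Nb.shift {P : Set Disk} {s d : Disk} {θ : ℝ} (h : Nb P s θ d) (n : ℤ) :
    Nb P s (θ + n * (2 * Real.pi)) d := by
  refine ⟨h.1, ?_⟩
  rw [h.2]
  simp [ev, Real.cos_add_int_mul_two_pi, Real.sin_add_int_mul_two_pi]

lemma Nb.unique {P : Set Disk} (hS : DSep P) {s d d' : Disk} {θ : ℝ} (h : Nb P s θ d)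
    (h' : Nb P s θ d') : d = d' := by
  by_contra hne
  have h1 := hS d h.1 d' h'.1 hne
  have hp := d'.radius_pos
  have hp' := d.radius_pos
  have h2 := dist_polar_sq s.center (s.radius + d.radius) (s.radius + d'.radius) θ θ
  rw [← h.2, ← h'.2, sub_self, Real.cos_zero] at h2
  nlinarith

lemma Nb.ne_self {P : Set Disk} {s d : Disk} {θ : ℝ} (h : Nb P s θ d) : s ≠ d := by
  rintro rfl
  have := h.tangent
  unfold Disk.Tangent at this
  rw [dist_self] at this
  linarith [s.radius_pos]

lemma nb_cos {P : Set Disk} (hS : DSep P) {s d d' : Disk} {θ φ : ℝ} (h : Nb P s θ d)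
    (h' : Nb P s φ d') (hne : d ≠ d') :
    2 * d.radius * d'.radius ≤
      (s.radius + d.radius) * (s.radius + d'.radius) * (1 - Real.cos (φ - θ)) := by
  have h1 := hS d h.1 d' h'.1 hne
  have h2 := dist_polar_sq s.center (s.radius + d.radius) (s.radius + d'.radius) θ φ
  rw [← h.2, ← h'.2] at h2
  have hp := d'.radius_pos
  have hp' := d.radius_pos
  nlinarith

lemma nb_cos_eq {P : Set Disk} {s d d' : Disk} {θ φ : ℝ} (h : Nb P s θ d)
    (h' : Nb P s φ d') (ht : d.Tangent d') :
    2 * d.radius * d'.radius =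
      (s.radius + d.radius) * (s.radius + d'.radius) * (1 - Real.cos (φ - θ)) := by
  have h2 := dist_polar_sq s.center (s.radius + d.radius) (s.radius + d'.radius) θ φ
  rw [← h.2, ← h'.2, ht] at h2
  nlinarith

lemma nb_sep {P : Set Disk} {r : ℝ} (hr : 0 < r) (hS : DSep P) (hR : Rad P r) {s d d' : Disk}
    (hs : s ∈ P) {θ φ : ℝ} (h : Nb P s θ d) (h' : Nb P s φ d') (hlt : θ < φ) : r ≤ φ - θ := by
  have hr1 := (hR d h.1)
  have hr2 := (hR d' h'.1)
  have hr3 := (hR s hs)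
  by_contra! hlt'
  have hc := Real.one_sub_sq_div_two_le_cos (x := φ - θ)
  by_cases hne : d = d'
  · subst hne
    have h2 := dist_polar_sq s.center (s.radius + d.radius) (s.radius + d.radius) θ φ
    rw [← h.2, ← h'.2, dist_self] at h2
    have h3 : Real.cos (φ - θ) = 1 := by
      have : 0 < (s.radius + d.radius) ^ 2 := by have := d.radius_pos; have := s.radius_pos; positivity
      nlinarith
    have h4 := (Real.cos_eq_one_iff_of_lt_of_lt (x := φ - θ)
      (by linarith [Real.pi_gt_three]) (by linarith [Real.pi_gt_three])).1 h3
    linarith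
  · have h1 := nb_cos hS h h' hne
    have e1 : (s.radius + d.radius) * r ≤ 2 * d.radius := by nlinarith
    have e2 : (s.radius + d'.radius) * r ≤ 2 * d'.radius := by nlinarith
    have e0 : 0 < (s.radius + d.radius) * (s.radius + d'.radius) := by
      have := d.radius_pos; have := d'.radius_pos; have := s.radius_pos; positivity
    have e3 : ((s.radius + d.radius) * r) * ((s.radius + d'.radius) * r)
        ≤ (2 * d.radius) * (2 * d'.radius) := by
      apply mul_le_mul e1 e2
      · have := d'.radius_pos; have := s.radius_pos; positivity
      · have := d.radius_pos; positivity
    have e4 : 1 - Real.cos (φ - θ) < r ^ 2 / 2 := by nlinarith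
    nlinarith

/-- the component of the complement seen through an arc without tangency points -/
lemma arc {P : Set Disk} {r : ℝ} (hr : 0 < r) (hS : DSep P) (hR : Rad P r) {s : Disk}
    (hs : s ∈ P) {θ₁ θ₂ : ℝ} (hlt : θ₁ < θ₂)
    (hno : ∀ φ d, θ₁ < φ → φ < θ₂ → ¬ Nb P s φ d) :
    ∃ x ∈ (packingUnion P)ᶜ,
      (∀ φ ∈ Icc θ₁ θ₂, s.center + s.radius • ev φ ∈
        closure (connectedComponentIn (packingUnion P)ᶜ x)) ∧
      (∀ φ ∈ Ioo θ₁ θ₂, ∃ t, s.radius < t ∧ s.center + t • ev φ ∈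
        connectedComponentIn (packingUnion P)ᶜ x) := by
  have hp := s.radius_pos
  set Q : Set Disk := P \ {s} with hQ
  have hclQ : IsClosed (packingUnion Q) := closed_union hr hS hR sdiff_subset
  set F : ℝ × ℝ → Plane := fun p => s.center + p.2 • ev p.1 with hF
  have hFc : Continuous F := by
    have := ev_cont
    fun_prop
  -- uniform sectors
  have sector : ∀ φ₁ φ₂, θ₁ < φ₁ → φ₂ < θ₂ → ∃ δ > 0,
      ∀ φ ∈ Icc φ₁ φ₂, ∀ t ∈ Ioo s.radius (s.radius + δ), F (φ, t) ∈ (packingUnion P)ᶜ := by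
    intro φ₁ φ₂ h1 h2
    have hcomp : IsCompact ((fun φ => F (φ, s.radius)) '' Icc φ₁ φ₂) :=
      isCompact_Icc.image (by fun_prop)
    obtain ⟨δ, hδ, hsub⟩ := hcomp.exists_thickening_subset_open hclQ.isOpen_compl (by
      rintro _ ⟨φ, hφ, rfl⟩ hmem
      obtain ⟨d, hd, hdist⟩ := mem_union.1 hmem
      have hds : d ≠ s := hd.2
      refine hno φ d (h1.trans_le hφ.1) (hφ.2.trans_lt h2) ⟨hd.1, ?_⟩
      have g1 := hS d hd.1 s hs hds
      have g2 : dist (F (φ, s.radius)) s.center = s.radius := dist_center_polar _ hp.le _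
      have g3 := dist_triangle_left d.center s.center (F (φ, s.radius))
      have g4 : dist d.center s.center = s.radius + d.radius := by linarith
      have hp' := d.radius_pos
      obtain ⟨ψ, hψ⟩ := exists_polar s.center d.center (by linarith) g4
      have g5 := dist_polar_sq s.center s.radius (s.radius + d.radius) φ ψ
      have g6 := dist_polar_sq s.center (s.radius + d.radius) (s.radius + d.radius) φ ψ
      rw [← hψ] at g5 g6
      have g7 : dist (s.center + s.radius • ev φ) d.center ≤ d.radius := hdist
      have g8 : dist (s.center + s.radius • ev φ) d.center ^ 2 ≤ d.radius ^ 2 :=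
        pow_le_pow_left₀ dist_nonneg g7 2
      have g9 : 1 ≤ Real.cos (ψ - φ) := by
        by_contra! hh
        have : 0 < s.radius * (s.radius + d.radius) := by positivity
        nlinarith
      have g10 : dist (s.center + (s.radius + d.radius) • ev φ) d.center ^ 2 ≤ 0 := by
        rw [g6]
        have : 0 < (s.radius + d.radius) ^ 2 := by positivity
        nlinarith
      have g11 : dist (s.center + (s.radius + d.radius) • ev φ) d.center = 0 := by
        have := sq_nonneg (dist (s.center + (s.radius + d.radius) • ev φ) d.center)
        exact pow_eq_zero_iff (two_ne_zero) |>.1 (le_antisymm g10 this)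
      exact (dist_eq_zero.1 g11).symm)
    refine ⟨δ, hδ, ?_⟩
    intro φ hφ t ht hmem
    obtain ⟨d, hd, hdist⟩ := mem_union.1 hmem
    have e1 : dist (F (φ, t)) (F (φ, s.radius)) = t - s.radius := by
      have := dist_polar_sq s.center t s.radius φ φ
      rw [sub_self, Real.cos_zero] at this
      have h2 : dist (F (φ, t)) (F (φ, s.radius)) ^ 2 = (t - s.radius) ^ 2 := by
        rw [show dist (F (φ, t)) (F (φ, s.radius)) =
          dist (s.center + t • ev φ) (s.center + s.radius • ev φ) from rfl, this]
        ring
      exact (sq_eq_sq₀ dist_nonneg (by linarith [ht.1])).1 h2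
    by_cases hds : d = s
    · subst hds
      have : dist (F (φ, t)) d.center = t := dist_center_polar _ (by linarith [ht.1]) _
      linarith [ht.1]
    · have : F (φ, t) ∈ (packingUnion Q)ᶜ := by
        apply hsub
        rw [Metric.mem_thickening_iff]
        exact ⟨_, ⟨φ, hφ, rfl⟩, by rw [e1]; linarith [ht.2]⟩
      exact this (mem_union.2 ⟨d, ⟨hd, hds⟩, hdist⟩)
  set m := (θ₁ + θ₂) / 2 with hm
  obtain ⟨δ, hδ, hsec⟩ := sector m m (by linarith) (by linarith)
  set x := F (m, s.radius + δ / 2) with hx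
  have hxm : x ∈ (packingUnion P)ᶜ :=
    hsec m ⟨le_rfl, le_rfl⟩ _ ⟨by linarith, by linarith⟩
  have hpre : ∀ φ₁ φ₂ a b : ℝ, IsPreconnected (F '' (Icc φ₁ φ₂ ×ˢ Ioo a b)) := by
    intro φ₁ φ₂ a b
    exact (isPreconnected_Icc.prod isPreconnected_Ioo).image _ hFc.continuousOn
  have hray : ∀ t ∈ Ioo s.radius (s.radius + δ), F (m, t) ∈
      connectedComponentIn (packingUnion P)ᶜ x := by
    intro t ht
    refine (hpre m m s.radius (s.radius + δ)).subset_connectedComponentIn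
      ⟨(m, s.radius + δ / 2), ⟨⟨le_rfl, le_rfl⟩, ⟨by simp; linarith, by simp; linarith⟩⟩, rfl⟩ ?_
      ⟨(m, t), ⟨⟨le_rfl, le_rfl⟩, ht⟩, rfl⟩
    rintro _ ⟨⟨φ, t⟩, ⟨h1, h2⟩, rfl⟩
    obtain rfl : m = φ := le_antisymm h1.1 h1.2
    exact hsec m h1 t h2
  have hall : ∀ φ ∈ Ioo θ₁ θ₂, ∃ δ' > 0, ∀ t ∈ Ioo s.radius (s.radius + δ'), F (φ, t) ∈
      connectedComponentIn (packingUnion P)ᶜ x := by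
    intro φ hφ
    obtain ⟨δ', hδ', hsec'⟩ := sector (min φ m) (max φ m)
      (lt_min hφ.1 (by linarith)) (max_lt hφ.2 (by linarith))
    refine ⟨δ', hδ', fun t ht => ?_⟩
    set t₀ := s.radius + min δ δ' / 2 with ht₀
    have hmin : 0 < min δ δ' := lt_min hδ hδ'
    have hx' := hray t₀ ⟨by linarith, by linarith [min_le_left δ δ']⟩
    rw [connectedComponentIn_eq hx']
    refine (hpre (min φ m) (max φ m) s.radius (s.radius + δ')).subset_connectedComponentIn
      ⟨(m, t₀), ⟨⟨min_le_right _ _, le_max_right _ _⟩, ⟨by simp; linarith,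
        by simp; linarith [min_le_right δ δ']⟩⟩, rfl⟩ ?_
      ⟨(φ, t), ⟨⟨min_le_left _ _, le_max_left _ _⟩, ht⟩, rfl⟩
    rintro _ ⟨⟨φ, t⟩, ⟨h1, h2⟩, rfl⟩
    exact hsec' φ h1 t h2
  refine ⟨x, hxm, ?_, ?_⟩
  · have hopen : ∀ φ ∈ Ioo θ₁ θ₂, F (φ, s.radius) ∈
        closure (connectedComponentIn (packingUnion P)ᶜ x) := by
      intro φ hφ
      obtain ⟨δ', hδ', h⟩ := hall φ hφ
      have hc : Continuous (fun t => F (φ, t)) := by fun_prop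
      have := map_mem_closure (s := Ioo s.radius (s.radius + δ'))
        (t := connectedComponentIn (packingUnion P)ᶜ x) hc (x := s.radius)
        (by rw [closure_Ioo (by linarith : s.radius < s.radius + δ').ne]; exact ⟨le_rfl, by linarith⟩) h
      exact this
    intro φ hφ
    have hc : Continuous (fun φ => F (φ, s.radius)) := by fun_prop
    have := map_mem_closure (s := Ioo θ₁ θ₂)
        (t := closure (connectedComponentIn (packingUnion P)ᶜ x)) hc (x := φ)
        (by rw [closure_Ioo hlt.ne]; exact hφ) hopen
    rwa [closure_closure] at this
  · intro φ hφ
    obtain ⟨δ', hδ', h⟩ := hall φ hφ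
    exact ⟨s.radius + δ' / 2, by linarith, h _ ⟨by linarith, by linarith⟩⟩

end

noncomputable section

/-- angle at the center of the disk of radius `ρ` in a triangle of tangent disks -/
def ang (ρ a b : ℝ) : ℝ := Real.arccos (1 - 2 * a * b / ((ρ + a) * (ρ + b)))

lemma Disk.Tangent.symm {d d' : Disk} (h : d.Tangent d') : d'.Tangent d := by
  unfold Disk.Tangent at *
  rw [dist_comm, h, add_comm]

/-- `d` touches the component of `x` -/
def Meets (P : Set Disk) (x : Plane) (d : Disk) : Prop :=
  d ∈ P ∧ (closure (connectedComponentIn (packingUnion P)ᶜ x) ∩ d.set).Nonempty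

lemma comp_tangent {P : Set Disk} (hC : IsCompactPacking P) {x : Plane}
    (hx : x ∈ (packingUnion P)ᶜ) {d d' : Disk} (hd : Meets P x d) (hd' : Meets P x d')
    (hne : d ≠ d') : d.Tangent d' := by
  obtain ⟨-, d₁, d₂, d₃, -, -, -, -, -, -, t1, t2, t3, heq⟩ := hC.2 x hx
  have h1 : d ∈ ({d₁, d₂, d₃} : Set Disk) := by rw [← heq]; exact hd
  have h2 : d' ∈ ({d₁, d₂, d₃} : Set Disk) := by rw [← heq]; exact hd'
  simp only [mem_insert_iff, mem_singleton_iff] at h1 h2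
  rcases h1 with rfl | rfl | rfl <;> rcases h2 with rfl | rfl | rfl <;>
    first | exact absurd rfl hne | assumption | (apply Disk.Tangent.symm; assumption)

lemma comp_third {P : Set Disk} (hC : IsCompactPacking P) {x : Plane}
    (hx : x ∈ (packingUnion P)ᶜ) {s d d' : Disk} (hs : Meets P x s) (hd : Meets P x d)
    (hd' : Meets P x d') (h1 : s ≠ d) (h2 : s ≠ d') (h3 : d ≠ d') {e : Disk} (he : Meets P x e) :
    e = s ∨ e = d ∨ e = d' := by
  obtain ⟨-, d₁, d₂, d₃, -, -, -, -, -, -, t1, t2, t3, heq⟩ := hC.2 x hx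
  have k : ∀ {a : Disk}, Meets P x a → a = d₁ ∨ a = d₂ ∨ a = d₃ := by
    intro a ha
    have h1 : a ∈ ({d₁, d₂, d₃} : Set Disk) := by rw [← heq]; exact ha
    simpa using h1
  have a1 := k hs
  have a2 := k hd
  have a3 := k hd'
  have a4 := k he
  clear heq k hs hd hd' he t1 t2 t3
  rcases a1 with rfl | rfl | rfl <;> rcases a2 with rfl | rfl | rfl <;>
    rcases a3 with rfl | rfl | rfl <;> rcases a4 with rfl | rfl | rfl <;> simp_all

lemma comp_other {P : Set Disk} (hC : IsCompactPacking P) {x : Plane}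
    (hx : x ∈ (packingUnion P)ᶜ) (s d : Disk) :
    ∃ e, Meets P x e ∧ e ≠ s ∧ e ≠ d := by
  obtain ⟨-, d₁, d₂, d₃, -, -, -, h1, h2, h3, t1, t2, t3, heq⟩ := hC.2 x hx
  have k : ∀ {a : Disk}, (a = d₁ ∨ a = d₂ ∨ a = d₃) → Meets P x a := by
    intro a ha
    have : a ∈ ({d₁, d₂, d₃} : Set Disk) := by simpa using ha
    rw [← heq] at this
    exact this
  by_cases e1 : d₁ = s ∨ d₁ = d
  · by_cases e2 : d₂ = s ∨ d₂ = d
    · refine ⟨d₃, k (by simp), ?_⟩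
      clear heq k t1 t2 t3
      rcases e1 with rfl | rfl <;> rcases e2 with rfl | rfl <;>
        first | exact absurd rfl h1 | exact ⟨h3.symm, h2.symm⟩ | exact ⟨h2.symm, h3.symm⟩
    · exact ⟨d₂, k (by simp), by tauto⟩
  · exact ⟨d₁, k (by simp), by tauto⟩

lemma next_nb {P : Set Disk} {r : ℝ} (hr : 0 < r) (hC : IsCompactPacking P) (hR : Rad P r)
    {s d : Disk} (hs : s ∈ P) {θ : ℝ} (h : Nb P s θ d) :
    ∃ g d', 0 < g ∧ g = ang s.radius d.radius d'.radius ∧ r ≤ g ∧ Nb P s (θ + g) d' ∧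
      d.Tangent d' ∧ ∀ φ e, θ < φ → φ < θ + g → ¬ Nb P s φ e := by
  have hS : DSep P := (isPacking_iff_sep P).1 hC.1
  have hcl : IsClosed (packingUnion P) := closed_union hr hS hR subset_rfl
  have hp := s.radius_pos
  have hpi := Real.pi_pos
  set G : Set ℝ := {g | 0 < g ∧ ∃ e, Nb P s (θ + g) e} with hG
  have hG2 : 2 * Real.pi ∈ G := ⟨by positivity, d, by simpa using h.shift 1⟩
  have hbdd : BddBelow G := ⟨0, fun g hg => hg.1.le⟩
  obtain ⟨g, hgG, hg⟩ := exists_lt_of_csInf_lt ⟨_, hG2⟩ (lt_add_of_pos_right (sInf G) hr)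
  have hmin : ∀ g' ∈ G, g ≤ g' := by
    intro g' hg'
    by_contra! hlt
    have h1 := csInf_le hbdd hg'
    obtain ⟨e', he'⟩ := hg'.2
    obtain ⟨e, he⟩ := hgG.2
    have := nb_sep hr hS hR hs he' he (by linarith)
    linarith
  obtain ⟨hg0, d', hd'⟩ := hgG
  have hno : ∀ φ e, θ < φ → φ < θ + g → ¬ Nb P s φ e := by
    intro φ e h1 h2 h3
    have := hmin (φ - θ) ⟨by linarith, e, by simpa using h3⟩
    linarith
  obtain ⟨x, hx, hxcl, hxin⟩ := arc hr hS hR hs (by linarith : θ < θ + g) hno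
  have pt : ∀ φ e, Nb P s φ e → s.center + s.radius • ev φ ∈ e.set := by
    intro φ e he
    change dist _ _ ≤ _
    rw [he.2]
    have hpe := e.radius_pos
    have h1 := dist_polar_sq s.center s.radius (s.radius + e.radius) φ φ
    rw [sub_self, Real.cos_zero] at h1
    exact (abs_le_of_sq_le_sq' (by nlinarith) hpe.le).2
  have ms : Meets P x s := ⟨hs, _, hxcl θ ⟨le_rfl, by linarith⟩, by
    change dist _ _ ≤ _
    rw [dist_center_polar _ hp.le]⟩
  have md : Meets P x d := ⟨h.1, _, hxcl θ ⟨le_rfl, by linarith⟩, pt θ d h⟩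
  have md' : Meets P x d' := ⟨hd'.1, _, hxcl (θ + g) ⟨by linarith, le_rfl⟩, pt _ d' hd'⟩
  -- the two neighbours are different
  have hg2 : g ≤ 2 * Real.pi := hmin _ hG2
  have hne : d ≠ d' := by
    intro heq
    obtain ⟨e, me, hes, hed⟩ := comp_other hC hx s d
    obtain ⟨φ, hφ⟩ := Nb.of_tangent me.1 (comp_tangent hC hx ms me hes.symm)
    set n : ℤ := ⌊(φ - θ) / (2 * Real.pi)⌋ with hn
    have hfl := Int.floor_le ((φ - θ) / (2 * Real.pi))
    have hfl2 := Int.lt_floor_add_one ((φ - θ) / (2 * Real.pi))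
    rw [← hn] at hfl hfl2
    rw [le_div_iff₀ (by positivity)] at hfl
    rw [div_lt_iff₀ (by positivity)] at hfl2
    have hsh := hφ.shift (-n)
    push_cast at hsh
    set φ' := φ + -(n : ℝ) * (2 * Real.pi) with hφ'
    have b1 : θ ≤ φ' := by rw [hφ']; linarith
    have b2 : φ' < θ + 2 * Real.pi := by rw [hφ']; linarith
    rcases b1.eq_or_lt with b | b
    · rw [← b] at hsh
      exact hed (Nb.unique hS hsh h)
    · have hge : g ≤ φ' - θ := hmin _ ⟨by linarith, e, by simpa using hsh⟩
      -- g < 2π but d = d' contradiction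
      have h2 := dist_polar_sq s.center (s.radius + d.radius) (s.radius + d'.radius) θ (θ + g)
      rw [← h.2, ← hd'.2, ← heq, dist_self] at h2
      have h3 : Real.cos (θ + g - θ) = 1 := by
        have : 0 < (s.radius + d.radius) ^ 2 := by have := d.radius_pos; positivity
        nlinarith
      have h4 := (Real.cos_eq_one_iff_of_lt_of_lt (x := θ + g - θ)
        (by linarith) (by linarith)).1 h3
      linarith
  have htan : d.Tangent d' := comp_tangent hC hx md md' hne
  have hcos := nb_cos_eq h hd' htan
  rw [add_sub_cancel_left] at hcos
  have hpd := d.radius_pos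
  have hpd' := d'.radius_pos
  have hprod : 0 < (s.radius + d.radius) * (s.radius + d'.radius) := by positivity
  have hcos' : Real.cos g = 1 - 2 * d.radius * d'.radius /
      ((s.radius + d.radius) * (s.radius + d'.radius)) := by
    rw [hcos]; field_simp; ring
  have hgpi : g ≤ Real.pi := by
    by_contra! hgt
    have hray : {y | ∃ t, s.radius < t ∧ y = s.center + t • ev (θ + g / 2)} ⊆
        connectedComponentIn (packingUnion P)ᶜ x := by
      apply escape hcl
      · have : {y | ∃ t, s.radius < t ∧ y = s.center + t • ev (θ + g / 2)} =
            (fun t : ℝ => s.center + t • ev (θ + g / 2)) '' Ioi s.radius := by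
          ext y; simp only [mem_setOf_eq, mem_image, mem_Ioi]
          constructor
          · rintro ⟨t, h1, rfl⟩; exact ⟨t, h1, rfl⟩
          · rintro ⟨t, h1, rfl⟩; exact ⟨t, h1, rfl⟩
        rw [this]
        exact isPreconnected_Ioi.image _ (by fun_prop)
      · obtain ⟨t, ht, hmem⟩ := hxin (θ + g / 2) ⟨by linarith, by linarith⟩
        exact ⟨_, ⟨t, ht, rfl⟩, hmem⟩
      · rintro e heP hem _ ⟨t, ht, rfl⟩ hmem
        have hmem' : dist (s.center + t • ev (θ + g / 2)) e.center ≤ e.radius := hmem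
        have hcn : Real.cos (g / 2) ≤ 0 :=
          Real.cos_nonpos_of_pi_div_two_le_of_le (by linarith) (by linarith)
        rcases comp_third hC hx ms md md' h.ne_self hd'.ne_self hne ⟨heP, hem⟩ with rfl | rfl | rfl
        · rw [dist_center_polar _ (by linarith)] at hmem'
          linarith
        · have h1 := dist_polar_sq s.center t (s.radius + e.radius) (θ + g / 2) θ
          rw [← h.2, show θ - (θ + g / 2) = -(g / 2) by ring, Real.cos_neg] at h1
          have h2 := pow_le_pow_left₀ dist_nonneg hmem' 2
          have : 0 ≤ t * (s.radius + e.radius) * (-Real.cos (g / 2)) :=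
            mul_nonneg (mul_nonneg (by linarith) (by linarith)) (by linarith)
          nlinarith
        · have h1 := dist_polar_sq s.center t (s.radius + e.radius) (θ + g / 2) (θ + g)
          rw [← hd'.2, show θ + g - (θ + g / 2) = g / 2 by ring] at h1
          have h2 := pow_le_pow_left₀ dist_nonneg hmem' 2
          have : 0 ≤ t * (s.radius + e.radius) * (-Real.cos (g / 2)) :=
            mul_nonneg (mul_nonneg (by linarith) (by linarith)) (by linarith)
          nlinarith
    have hb := (hC.2 x hx).1
    obtain ⟨K, hK⟩ := (hb.subset hray).subset_closedBall s.center
    have := hK ⟨s.radius + 1 + |K|, by linarith [abs_nonneg K], rfl⟩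
    rw [mem_closedBall, dist_center_polar _ (by positivity)] at this
    linarith [le_abs_self K]
  refine ⟨g, d', hg0, ?_, ?_, hd', htan, hno⟩
  · unfold ang
    rw [← hcos', Real.arccos_cos hg0.le hgpi]
  · have := nb_sep hr hS hR hs h hd' (by linarith)
    linarith

end

noncomputable section

lemma ang_comm (ρ a b : ℝ) : ang ρ a b = ang ρ b a := by
  unfold ang
  congr 2
  ring

lemma walk_aux {P : Set Disk} {r : ℝ} (hr : 0 < r) (hr1 : r < 1) (hC : IsCompactPacking P)
    (hR : Rad P r) (hI : RadiiIn P {1, r})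
    {s d₀ : Disk} (hs : s ∈ P) {θ₀ : ℝ} (h₀ : Nb P s θ₀ d₀) (n : ℕ) :
    ∃ (a b c : ℕ) (θ : ℝ) (d : Disk), Nb P s θ d ∧
      θ = θ₀ + (a * ang s.radius 1 1 + b * ang s.radius 1 r + c * ang s.radius r r) ∧
      θ ≤ θ₀ + 2 * Real.pi ∧ (θ = θ₀ + 2 * Real.pi ∨ n ≤ a + b + c) ∧
      r * ((a + b + c : ℕ) : ℝ) ≤ θ - θ₀ ∧
      (d.radius = d₀.radius ↔ Even b) ∧
      (0 < c → ∃ e ∈ P, ∃ e' ∈ P, e.radius = r ∧ e'.radius = r ∧ s.Tangent e ∧ s.Tangent e' ∧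
        e.Tangent e') ∧
      (0 < a → ∃ e ∈ P, e.radius = 1 ∧ s.Tangent e) ∧
      (b = 0 → ∀ φ e, θ₀ ≤ φ → φ ≤ θ → Nb P s φ e → e.radius = d₀.radius) := by
  have hS : DSep P := (isPacking_iff_sep P).1 hC.1
  have hpi := Real.pi_pos
  induction n with
  | zero =>
    refine ⟨0, 0, 0, θ₀, d₀, h₀, by simp, by linarith, by simp, by simp, by simp, by simp, by simp,
      ?_⟩
    intro _ φ e h1 h2 h3
    obtain rfl := le_antisymm h1 h2
    rw [Nb.unique hS h3 h₀]
  | succ n ih =>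
    obtain ⟨a, b, c, θ, d, hd, hθ, hle, hor, hsz, hpar, hc, ha, hb⟩ := ih
    rcases eq_or_ne θ (θ₀ + 2 * Real.pi) with heq | hneq
    · exact ⟨a, b, c, θ, d, hd, hθ, hle, Or.inl heq, hsz, hpar, hc, ha, hb⟩
    have hn : n ≤ a + b + c := by tauto
    have hlt := lt_of_le_of_ne hle hneq
    obtain ⟨g, d', hg0, hg, hgr, hd', htan, hno⟩ := next_nb hr hC hR hs hd
    have hle' : θ + g ≤ θ₀ + 2 * Real.pi := by
      by_contra! hgt
      exact hno (θ₀ + 2 * Real.pi) d₀ hlt hgt (by simpa using h₀.shift 1)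
    have hb' : b = 0 → d'.radius = d₀.radius →
        ∀ φ e, θ₀ ≤ φ → φ ≤ θ + g → Nb P s φ e → e.radius = d₀.radius := by
      intro h1 h2 φ e h3 h4 h5
      rcases le_or_gt φ θ with h6 | h6
      · exact hb h1 φ e h3 h6 h5
      · rcases h4.lt_or_eq with h7 | h7
        · exact absurd h5 (hno φ e h6 h7)
        · subst h7
          rw [Nb.unique hS h5 hd', h2]
    have hI1 : d.radius = 1 ∨ d.radius = r := hI d hd.1
    have hI2 : d'.radius = 1 ∨ d'.radius = r := hI d' hd'.1
    have hI0 : d₀.radius = 1 ∨ d₀.radius = r := hI d₀ h₀.1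
    have hmore : r * ((a + b + c : ℕ) : ℝ) + r ≤ θ + g - θ₀ := by linarith
    rcases hI1 with r1 | r1 <;> rcases hI2 with r2 | r2
    · refine ⟨a + 1, b, c, θ + g, d', hd', ?_, hle', Or.inr (by omega), ?_, ?_, hc, ?_, ?_⟩
      · rw [hg, r1, r2, hθ]; push_cast; ring
      · push_cast at hmore ⊢; linarith
      · rw [← hpar, r1, r2]
      · exact fun _ => ⟨d, hd.1, r1, hd.tangent⟩
      · intro h
        exact hb' h (by rw [r2, ← r1, hpar, h]; simp)
    · refine ⟨a, b + 1, c, θ + g, d', hd', ?_, hle', Or.inr (by omega), ?_, ?_, hc, ha, by simp⟩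
      · rw [hg, r1, r2, hθ]; push_cast; ring
      · push_cast at hmore ⊢; linarith
      · rw [Nat.even_add_one, ← hpar, r1, r2]
        rcases hI0 with h | h <;> rw [h] <;> grind
    · refine ⟨a, b + 1, c, θ + g, d', hd', ?_, hle', Or.inr (by omega), ?_, ?_, hc, ha, by simp⟩
      · rw [hg, r1, r2, hθ, ang_comm s.radius r 1]; push_cast; ring
      · push_cast at hmore ⊢; linarith
      · rw [Nat.even_add_one, ← hpar, r1, r2]
        rcases hI0 with h | h <;> rw [h] <;> grind
    · refine ⟨a, b, c + 1, θ + g, d', hd', ?_, hle', Or.inr (by omega), ?_, ?_, ?_, ha, ?_⟩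
      · rw [hg, r1, r2, hθ]; push_cast; ring
      · push_cast at hmore ⊢; linarith
      · rw [← hpar, r1, r2]
      · exact fun _ => ⟨d, hd.1, d', hd'.1, r1, r2, hd.tangent, hd'.tangent, htan⟩
      · intro h
        exact hb' h (by rw [r2, ← r1, hpar, h]; simp)

lemma walk {P : Set Disk} {r : ℝ} (hr : 0 < r) (hr1 : r < 1) (hC : IsCompactPacking P)
    (hR : Rad P r) (hI : RadiiIn P {1, r})
    {s d₀ : Disk} (hs : s ∈ P) (hd₀ : d₀ ∈ P) (ht : s.Tangent d₀) :
    ∃ a b c : ℕ,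
      a * ang s.radius 1 1 + b * ang s.radius 1 r + c * ang s.radius r r = 2 * Real.pi ∧
      Even b ∧
      (0 < c → ∃ e ∈ P, ∃ e' ∈ P, e.radius = r ∧ e'.radius = r ∧ s.Tangent e ∧ s.Tangent e' ∧
        e.Tangent e') ∧
      (0 < a → ∃ e ∈ P, e.radius = 1 ∧ s.Tangent e) ∧
      (b = 0 → ∀ e ∈ P, s.Tangent e → e.radius = d₀.radius) := by
  have hS : DSep P := (isPacking_iff_sep P).1 hC.1
  have hpi := Real.pi_pos
  obtain ⟨θ₀, h₀⟩ := Nb.of_tangent hd₀ ht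
  obtain ⟨n, hn⟩ := exists_nat_gt (2 * Real.pi / r)
  rw [div_lt_iff₀ hr] at hn
  obtain ⟨a, b, c, θ, d, hd, hθ, hle, hor, hsz, hpar, hc, ha, hb⟩ :=
    walk_aux hr hr1 hC hR hI hs h₀ n
  have heq : θ = θ₀ + 2 * Real.pi := by
    rcases hor with h | h
    · exact h
    · exfalso
      have : (n : ℝ) ≤ ((a + b + c : ℕ) : ℝ) := by exact_mod_cast h
      nlinarith
  refine ⟨a, b, c, by linarith, ?_, hc, ha, ?_⟩
  · rw [← hpar]
    have h1 : Nb P s θ d₀ := by rw [heq]; simpa using h₀.shift 1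
    rw [Nb.unique hS hd h1]
  · intro hb0 e he hte
    obtain ⟨φ, hφ⟩ := Nb.of_tangent he hte
    set n : ℤ := ⌊(φ - θ₀) / (2 * Real.pi)⌋ with hn
    have hfl := Int.floor_le ((φ - θ₀) / (2 * Real.pi))
    have hfl2 := Int.lt_floor_add_one ((φ - θ₀) / (2 * Real.pi))
    rw [← hn] at hfl hfl2
    rw [le_div_iff₀ (by positivity)] at hfl
    rw [div_lt_iff₀ (by positivity)] at hfl2
    have hsh := hφ.shift (-n)
    push_cast at hsh
    exact hb hb0 _ e (by linarith) (by linarith) hsh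

/-- some small disk touches some large disk -/
lemma exists_mixed {P : Set Disk} {r : ℝ} (hr : 0 < r) (hr1 : r < 1) (hC : IsCompactPacking P)
    (hR : Rad P r) (hI : RadiiIn P {1, r}) (h1 : UsesRadius P 1) (h2 : UsesRadius P r) :
    ∃ s ∈ P, ∃ d ∈ P, s.radius = r ∧ d.radius = 1 ∧ s.Tangent d := by
  have hS : DSep P := (isPacking_iff_sep P).1 hC.1
  obtain ⟨l, hl, hl1⟩ := h1
  obtain ⟨s, hs, hsr⟩ := h2
  set PL : Set Disk := {d ∈ P | d.radius = 1} with hPL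
  set PS : Set Disk := {d ∈ P | d.radius = r} with hPS
  have cL : IsClosed (packingUnion PL) := closed_union hr hS hR (fun d hd => hd.1)
  have cS : IsClosed (packingUnion PS) := closed_union hr hS hR (fun d hd => hd.1)
  set f : ℝ → Plane := fun t => AffineMap.lineMap l.center s.center t with hf
  have hfc : Continuous f := AffineMap.lineMap_continuous
  set A : Set ℝ := Icc 0 1 ∩ f ⁻¹' packingUnion PL with hA
  set B : Set ℝ := Icc 0 1 ∩ f ⁻¹' packingUnion PS with hB
  have cA : IsCompact A := isCompact_Icc.inter_right (cL.preimage hfc)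
  have cB : IsCompact B := isCompact_Icc.inter_right (cS.preimage hfc)
  have nA : A.Nonempty := ⟨0, by simp, mem_union.2 ⟨l, ⟨hl, hl1⟩, by
    simp [hf, l.radius_pos.le]⟩⟩
  have nB : B.Nonempty := ⟨1, by simp, mem_union.2 ⟨s, ⟨hs, hsr⟩, by
    simp [hf, s.radius_pos.le]⟩⟩
  obtain ⟨⟨p, q⟩, ⟨hp, hq⟩, hmin⟩ := (cA.prod cB).exists_isMinOn (nA.prod nB)
    (f := fun z : ℝ × ℝ => dist z.1 z.2) (by fun_prop)
  simp only at hp hq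
  have hmin' : ∀ a ∈ A, ∀ b ∈ B, dist p q ≤ dist a b := by
    intro a ha b hb
    exact hmin (show (a, b) ∈ A ×ˢ B from ⟨ha, hb⟩)
  obtain ⟨d, ⟨hd, hd1⟩, hdp⟩ := mem_union.1 hp.2
  obtain ⟨e, ⟨he, her⟩, heq⟩ := mem_union.1 hq.2
  refine ⟨e, he, d, hd, her, hd1, ?_⟩
  have hne : e ≠ d := by
    rintro rfl
    linarith
  by_cases hpq : p = q
  · subst hpq
    have g1 := hS e he d hd hne
    have g2 := dist_triangle_left e.center d.center (f p)
    unfold Disk.Tangent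
    linarith
  -- open segment of parameters between p and q
  have hin : ∀ t ∈ openSegment ℝ p q, dist t q < dist p q ∧ dist p t < dist p q ∧ t ∈ Icc (0:ℝ) 1 := by
    rintro _ ⟨u, v, hu, hv, huv, rfl⟩
    have hd : 0 < |p - q| := abs_pos.2 (sub_ne_zero.2 hpq)
    refine ⟨?_, ?_, ?_⟩
    · rw [Real.dist_eq, Real.dist_eq]
      have : u • p + v • q - q = u * (p - q) := by
        simp only [smul_eq_mul]; linear_combination q * huv
      rw [this, abs_mul, abs_of_pos hu]
      nlinarith
    · rw [Real.dist_eq, Real.dist_eq]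
      have : p - (u • p + v • q) = v * (p - q) := by
        simp only [smul_eq_mul]; linear_combination -p * huv
      rw [this, abs_mul, abs_of_pos hv]
      nlinarith
    · exact convex_Icc 0 1 hp.1 hq.1 hu.le hv.le huv
  have hout : f '' openSegment ℝ p q ⊆ (packingUnion P)ᶜ := by
    rintro _ ⟨t, ht, rfl⟩ hmem
    obtain ⟨k, hk, hkd⟩ := mem_union.1 hmem
    obtain ⟨g1, g2, g3⟩ := hin t ht
    rcases hI k hk with hk1 | hk1
    · have := hmin' t ⟨g3, mem_union.2 ⟨k, ⟨hk, hk1⟩, hkd⟩⟩ q hq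
      linarith
    · have := hmin' p hp t ⟨g3, mem_union.2 ⟨k, ⟨hk, hk1⟩, hkd⟩⟩
      linarith
  set m : ℝ := (1 / 2 : ℝ) • p + (1 / 2 : ℝ) • q with hm
  have hmm : m ∈ openSegment ℝ p q := ⟨1 / 2, 1 / 2, by norm_num, by norm_num, by norm_num, rfl⟩
  have hxm : f m ∈ (packingUnion P)ᶜ := hout ⟨m, hmm, rfl⟩
  have hsub : f '' openSegment ℝ p q ⊆ connectedComponentIn (packingUnion P)ᶜ (f m) := by
    refine IsPreconnected.subset_connectedComponentIn ?_ ⟨m, hmm, rfl⟩ hout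
    exact (convex_openSegment p q).isPreconnected.image _ hfc.continuousOn
  have hcl : ∀ t ∈ closure (openSegment ℝ p q),
      f t ∈ closure (connectedComponentIn (packingUnion P)ᶜ (f m)) := by
    intro t ht
    exact map_mem_closure hfc ht (fun y hy => hsub ⟨y, hy, rfl⟩)
  rw [closure_openSegment] at hcl
  exact comp_tangent hC hxm ⟨he, f q, hcl q (right_mem_segment ℝ p q), heq⟩
    ⟨hd, f p, hcl p (left_mem_segment ℝ p q), hdp⟩ hne

end

noncomputable section

/-- the nine possible coronas `(a, b, c)` of a small disk -/
def codes : Finset (ℕ × ℕ × ℕ) :=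
  {(3, 0, 0), (4, 0, 0), (1, 2, 1), (2, 2, 0), (1, 2, 2), (0, 4, 1), (2, 2, 1), (1, 4, 0), (3, 2, 0)}

/-- the corona equation -/
def CodeEq (k : ℕ × ℕ × ℕ) (r : ℝ) : Prop :=
  k.1 * ang r 1 1 + k.2.1 * ang r 1 r + k.2.2 * ang r r r = 2 * Real.pi

lemma ang_rrr {r : ℝ} (hr : 0 < r) : ang r r r = Real.pi / 3 := by
  unfold ang
  rw [← Real.arccos_cos (x := Real.pi / 3) (by linarith [Real.pi_pos]) (by linarith [Real.pi_pos]),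
    Real.cos_pi_div_three]
  congr 1
  field_simp
  ring

lemma ang_r1r {r : ℝ} (hr : 0 < r) : ang r 1 r = Real.arccos (1 - 1 / (1 + r)) := by
  unfold ang
  congr 1
  field_simp
  ring

lemma ang_r11 {r : ℝ} : ang r 1 1 = Real.arccos (1 - 2 / (1 + r) ^ 2) := by
  unfold ang
  congr 2
  ring

lemma A_anti {r s : ℝ} (hr : 0 < r) (hrs : r < s) : ang s 1 1 < ang r 1 1 := by
  rw [ang_r11, ang_r11]
  have h2 : 2 / (1 + s) ^ 2 < 2 / (1 + r) ^ 2 := by gcongr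
  have h3 : 2 / (1 + r) ^ 2 < 2 := by
    rw [div_lt_iff₀ (by positivity)]; nlinarith
  have h4 : 0 < 2 / (1 + s) ^ 2 := by have : 0 < s := by linarith
                                      positivity
  exact Real.strictAntiOn_arccos ⟨by linarith, by linarith⟩ ⟨by linarith, by linarith⟩ (by linarith)

lemma B_anti {r s : ℝ} (hr : 0 < r) (hrs : r < s) : ang s 1 s < ang r 1 r := by
  rw [ang_r1r hr, ang_r1r (by linarith)]
  have h2 : 1 / (1 + s) < 1 / (1 + r) := by gcongr
  have h3 : 1 / (1 + r) < 1 := by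
    rw [div_lt_iff₀ (by positivity)]; nlinarith
  have h4 : 0 < 1 / (1 + s) := by have : 0 < s := by linarith
                                  positivity
  exact Real.strictAntiOn_arccos ⟨by linarith, by linarith⟩ ⟨by linarith, by linarith⟩ (by linarith)

lemma A_gt {r : ℝ} (hr : 0 < r) (hr1 : r < 1) : Real.pi / 3 < ang r 1 1 := by
  have := A_anti hr hr1
  rwa [ang_rrr one_pos] at this

lemma B_gt {r : ℝ} (hr : 0 < r) (hr1 : r < 1) : Real.pi / 3 < ang r 1 r := by
  have := B_anti hr hr1
  rwa [ang_rrr one_pos] at this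

lemma A_lt {r : ℝ} (hr : 0 < r) : ang r 1 1 < Real.pi := by
  rw [ang_r11]
  refine lt_of_le_of_ne (Real.arccos_le_pi _) ?_
  rw [Ne, Real.arccos_eq_pi]
  have h3 : 2 / (1 + r) ^ 2 < 2 := by
    rw [div_lt_iff₀ (by positivity)]; nlinarith
  linarith

lemma B_lt {r : ℝ} (hr : 0 < r) : ang r 1 r < Real.pi / 2 := by
  rw [ang_r1r hr, Real.arccos_lt_pi_div_two]
  have h3 : 1 / (1 + r) < 1 := by
    rw [div_lt_iff₀ (by positivity)]; nlinarith
  linarith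

lemma code_inj {k : ℕ × ℕ × ℕ} (hk : k ∈ codes) {r s : ℝ} (hr : 0 < r) (hs : 0 < s)
    (h : CodeEq k r) (h' : CodeEq k s) : r = s := by
  have main : ∀ {r s : ℝ}, 0 < r → 0 < s → CodeEq k r → CodeEq k s → ¬ r < s := by
    intro r s hr hs h h' hlt
    have h1 := A_anti hr hlt
    have h2 := B_anti hr hlt
    unfold CodeEq at h h'
    rw [ang_rrr hr] at h
    rw [ang_rrr hs] at h'
    simp only [codes, Finset.mem_insert, Finset.mem_singleton] at hk
    rcases hk with rfl | rfl | rfl | rfl | rfl | rfl | rfl | rfl | rfl <;>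
      norm_num at h h' <;> linarith
  exact le_antisymm (not_lt.1 (main hs hr h' h)) (not_lt.1 (main hr hs h h'))

/-- enumeration of coronas -/
lemma enum_codes {A B p : ℝ} (hp : 0 < p) (hA : p / 3 < A) (hB : p / 3 < B) (hA' : A < p)
    (hB' : B < p / 2) {a b c : ℕ} (h : a * A + b * B + c * (p / 3) = 2 * p) (hb : Even b)
    (hbc : b = 0 → c = 0) : (a, b, c) ∈ codes ∨ (a, b, c) = (5, 0, 0) := by
  have h6 : a + b + c ≤ 6 := by
    by_contra! hgt
    have : (7 : ℝ) ≤ a + b + c := by exact_mod_cast hgt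
    have : (a : ℝ) * (p / 3) ≤ a * A := by gcongr
    have : (b : ℝ) * (p / 3) ≤ b * B := by gcongr
    nlinarith
  have ha6 : a ≤ 6 := by omega
  have hb6 : b ≤ 6 := by omega
  have hc6 : c ≤ 6 := by omega
  interval_cases b
  · have : c = 0 := hbc rfl
    subst this
    interval_cases a <;> simp [codes] <;> norm_num at h <;> linarith
  · exact absurd hb (by decide)
  · interval_cases a <;> interval_cases c <;> first | omega | (simp [codes]; done) |
      (exfalso; norm_num at h; linarith)
  · exact absurd hb (by decide)
  · interval_cases a <;> interval_cases c <;> first | omega | (simp [codes]; done) |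
      (exfalso; norm_num at h; linarith)
  · exact absurd hb (by decide)
  · interval_cases a <;> interval_cases c <;> first | omega | (simp [codes]; done) |
      (exfalso; norm_num at h; linarith)

lemma five_impossible {r : ℝ} (hr : 0 < r) (hA : 5 * ang r 1 1 = 2 * Real.pi) {a b : ℕ}
    (hb : Even b) (hb0 : b ≠ 0) (h : a * ang 1 1 1 + b * ang 1 1 r = 2 * Real.pi) : False := by
  have hpi := Real.pi_pos
  have hβ : 2 * ang 1 1 r = Real.pi - ang r 1 1 := by
    set β := ang 1 1 r with hβdef
    have hcb : Real.cos β = 1 / (1 + r) := by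
      rw [hβdef]; unfold ang
      have e : 1 - 2 * 1 * r / ((1 + 1) * (1 + r)) = 1 / (1 + r) := by field_simp; ring
      rw [e, Real.cos_arccos]
      · have : 0 < 1 / (1 + r) := by positivity
        linarith
      · rw [div_le_iff₀ (by positivity)]; linarith
    have hbpi : β ≤ Real.pi := Real.arccos_le_pi _
    have hb1 : β < Real.pi / 2 := by
      by_contra! hge
      have := Real.cos_nonpos_of_pi_div_two_le_of_le hge
        (by linarith : β ≤ Real.pi + Real.pi / 2)
      rw [hcb] at this
      have : 0 < 1 / (1 + r) := by positivity
      linarith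
    have hb2 : 0 ≤ β := Real.arccos_nonneg _
    have hcA : Real.cos (2 * β) = Real.cos (Real.pi - ang r 1 1) := by
      rw [Real.cos_two_mul, Real.cos_pi_sub, hcb, ang_r11, Real.cos_arccos]
      · rw [div_pow]; ring
      · have h3 : 2 / (1 + r) ^ 2 < 2 := by
          rw [div_lt_iff₀ (by positivity)]; nlinarith
        linarith
      · have : 0 < 2 / (1 + r) ^ 2 := by positivity
        linarith
    exact Real.injOn_cos ⟨by linarith, by linarith⟩ ⟨by linarith, by linarith⟩ hcA
  rw [ang_rrr one_pos] at h
  have hbv : ang 1 1 r = 3 * Real.pi / 10 := by linarith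
  rw [hbv] at h
  have h3 : ((10 * a + 9 * b : ℕ) : ℝ) = 60 := by
    push_cast
    have : (a * 10 + b * 9 - 60 : ℝ) * Real.pi = 0 := by linear_combination 30 * h
    rcases mul_eq_zero.1 this with h | h
    · linarith
    · exact absurd h hpi.ne'
  have h4 : 10 * a + 9 * b = 60 := by exact_mod_cast h3
  omega

theorem classification {r : ℝ} (hr : 0 < r) (hr1 : r < 1) {P : Set Disk}
    (hC : IsCompactPacking P) (hI : RadiiIn P {1, r}) (h1 : UsesRadius P 1)
    (h2 : UsesRadius P r) : ∃ k ∈ codes, CodeEq k r := by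
  have hR : Rad P r := by
    intro d hd
    rcases hI d hd with h | h
    · rw [h]; exact ⟨hr1.le, le_rfl⟩
    · rw [mem_singleton_iff.1 h]; exact ⟨le_rfl, hr1.le⟩
  have hpi := Real.pi_pos
  by_contra! hno
  -- every small disk touching a large one has corona 11111
  have key : ∀ s ∈ P, s.radius = r → ∀ d ∈ P, d.radius = 1 → s.Tangent d →
      5 * ang r 1 1 = 2 * Real.pi ∧ ∀ e ∈ P, s.Tangent e → e.radius = 1 := by
    intro s hs hsr d hd hd1 ht
    obtain ⟨a, b, c, heq, hev, hc, ha, hb⟩ := walk hr hr1 hC hR hI hs hd ht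
    rw [hsr] at heq
    have hbc : b = 0 → c = 0 := by
      intro hb0
      by_contra hc0
      obtain ⟨e, he, -, -, her, -, hte, -⟩ := hc (Nat.pos_of_ne_zero hc0)
      have := hb hb0 e he hte
      rw [her, hd1] at this
      linarith
    have heq' := heq
    rw [ang_rrr hr] at heq'
    rcases enum_codes hpi (A_gt hr hr1) (B_gt hr hr1) (A_lt hr) (B_lt hr) heq' hev hbc with h | h
    · exact absurd heq (hno _ h)
    · simp only [Prod.mk.injEq] at h
      obtain ⟨rfl, rfl, rfl⟩ := h
      refine ⟨by simpa using heq, ?_⟩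
      intro e he hte
      rw [hb rfl e he hte, hd1]
  obtain ⟨s, hs, l, hl, hsr, hl1, ht⟩ := exists_mixed hr hr1 hC hR hI h1 h2
  obtain ⟨h5, -⟩ := key s hs hsr l hl hl1 ht
  obtain ⟨a, b, c, heq, hev, hc, ha, hb⟩ := walk hr hr1 hC hR hI hl hs ht.symm
  have hc0 : c = 0 := by
    by_contra hc0
    obtain ⟨e, he, e', he', her, her', hte, hte', htt⟩ := hc (Nat.pos_of_ne_zero hc0)
    have := (key e he her l hl hl1 hte.symm).2 e' he' htt
    linarith
  have hb0 : b ≠ 0 := by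
    intro hb0
    have ha0 : a = 0 := by
      by_contra ha0
      obtain ⟨e, he, her, hte⟩ := ha (Nat.pos_of_ne_zero ha0)
      have := hb hb0 e he hte
      linarith
    rw [ha0, hb0, hc0] at heq
    norm_num at heq
  rw [hl1, hc0] at heq
  exact five_impossible hr h5 hev hb0 (by simpa using heq)

/-- the set in the theorem -/
def RatioSet : Set ℝ := {r : ℝ | 0 < r ∧ r < 1 ∧
      ∃ P : Set Disk, IsCompactPacking P ∧ RadiiIn P {1, r} ∧
        UsesRadius P 1 ∧ UsesRadius P r}

theorem ratioSet_le : RatioSet.Finite ∧ RatioSet.ncard ≤ 9 := by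
  have hk : ∀ r ∈ RatioSet, ∃ k ∈ codes, CodeEq k r := by
    rintro r ⟨hr, hr1, P, hC, hI, h1, h2⟩
    exact classification hr hr1 hC hI h1 h2
  choose! f hf using hk
  have hmaps : MapsTo f RatioSet (codes : Set (ℕ × ℕ × ℕ)) := fun r hr => (hf r hr).1
  have hinj : InjOn f RatioSet := by
    intro r hr s hs h
    have h1 := (hf r hr).2
    have h2 := (hf s hs).2
    rw [← h] at h2
    exact code_inj (hf r hr).1 hr.1 hs.1 h1 h2
  refine ⟨Set.Finite.of_injOn hmaps hinj codes.finite_toSet, ?_⟩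
  have := Set.ncard_le_ncard_of_injOn f hmaps hinj codes.finite_toSet
  rw [Set.ncard_coe_finset] at this
  exact this.trans (by decide)

end

noncomputable section

/-- signed doubled area of a triangle -/
def SA (p q x : Plane) : ℝ := (q 0 - p 0) * (x 1 - p 1) - (q 1 - p 1) * (x 0 - p 0)

lemma SA_cont (p q : Plane) : Continuous (SA p q) := by
  unfold SA
  fun_prop

lemma SA_rot (p q x : Plane) : SA q x p = SA p q x := by unfold SA; ring

lemma SA_sum (p q w x : Plane) : SA p q x + SA q w x + SA w p x = SA p q w := by
  unfold SA; ring

lemma SA_bary0 (p q w x : Plane) (i : Fin 2) :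
    SA p q w * x i = SA q w x * p i + SA w p x * q i + SA p q x * w i := by
  unfold SA
  fin_cases i <;> simp <;> ring

/-- the closed triangle -/
def TT (p q w : Plane) : Set Plane := {x | 0 ≤ SA p q x ∧ 0 ≤ SA q w x ∧ 0 ≤ SA w p x}

/-- the open triangle -/
def TO (p q w : Plane) : Set Plane := {x | 0 < SA p q x ∧ 0 < SA q w x ∧ 0 < SA w p x}

lemma TT_closed (p q w : Plane) : IsClosed (TT p q w) :=
  (isClosed_le continuous_const (SA_cont p q)).inter
    ((isClosed_le continuous_const (SA_cont q w)).inter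
      (isClosed_le continuous_const (SA_cont w p)))

lemma TO_open (p q w : Plane) : IsOpen (TO p q w) :=
  (isOpen_lt continuous_const (SA_cont p q)).inter
    ((isOpen_lt continuous_const (SA_cont q w)).inter
      (isOpen_lt continuous_const (SA_cont w p)))

lemma TO_sub (p q w : Plane) : TO p q w ⊆ TT p q w := fun _ h => ⟨h.1.le, h.2.1.le, h.2.2.le⟩

lemma TO_closure (p q w : Plane) : closure (TO p q w) ⊆ TT p q w :=
  closure_minimal (TO_sub p q w) (TT_closed p q w)

/-- `x` lies on the segment from `p` to `q` -/
def OnEdge (p q x : Plane) : Prop :=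
  ∃ t : ℝ, 0 ≤ t ∧ t ≤ 1 ∧ ∀ i, x i = (1 - t) * p i + t * q i

lemma onEdge_of {p q w x : Plane} (hD : 0 < SA p q w) (h0 : SA p q x = 0) (h1 : 0 ≤ SA q w x)
    (h2 : 0 ≤ SA w p x) : OnEdge p q x := by
  have hs := SA_sum p q w x
  refine ⟨SA w p x / SA p q w, by positivity, ?_, ?_⟩
  · rw [div_le_one hD]; linarith
  · intro i
    have := SA_bary0 p q w x i
    rw [h0] at this
    field_simp
    rw [show SA p q w - SA w p x = SA q w x by linarith]
    linarith

lemma edge_cases {p q w x : Plane} (hD : 0 < SA p q w) (hx : x ∈ TT p q w) (hx' : x ∉ TO p q w) :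
    OnEdge p q x ∨ OnEdge q w x ∨ OnEdge w p x := by
  obtain ⟨h1, h2, h3⟩ := hx
  rcases h1.lt_or_eq with h1' | h1'
  · rcases h2.lt_or_eq with h2' | h2'
    · rcases h3.lt_or_eq with h3' | h3'
      · exact absurd ⟨h1', h2', h3'⟩ hx'
      · exact Or.inr (Or.inr (onEdge_of (w := q) (by rw [SA_rot, SA_rot] ; exact hD) h3'.symm h1 h2))
    · exact Or.inr (Or.inl (onEdge_of (w := p) (by rw [SA_rot] ; exact hD) h2'.symm h3 h1))
  · exact Or.inl (onEdge_of hD h1'.symm h2 h3)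

/-- a disk not overlapping two tangent disks misses the edge joining their centers -/
lemma edge_far {d e f : Disk} {x : Plane} (ht : d.Tangent e)
    (h1 : d.radius + f.radius ≤ dist d.center f.center)
    (h2 : e.radius + f.radius ≤ dist e.center f.center) (hx : OnEdge d.center e.center x) :
    f.radius < dist x f.center := by
  obtain ⟨t, ht0, ht1, hx⟩ := hx
  have hd := d.radius_pos
  have he := e.radius_pos
  have hf := f.radius_pos
  have a1 : (d.radius + f.radius) ^ 2 ≤ dist d.center f.center ^ 2 := by gcongr
  have a2 : (e.radius + f.radius) ^ 2 ≤ dist e.center f.center ^ 2 := by gcongr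
  have a3 : dist d.center e.center ^ 2 = (d.radius + e.radius) ^ 2 := by
    unfold Disk.Tangent at ht; rw [ht]
  rw [dist_sq] at a1 a2 a3
  have a4 : (1 - t) * (d.radius + f.radius) ^ 2 + t * (e.radius + f.radius) ^ 2
      - t * (1 - t) * (d.radius + e.radius) ^ 2 ≤ dist x f.center ^ 2 := by
    rw [dist_sq, hx 0, hx 1, ← a3]
    have b1 := mul_le_mul_of_nonneg_left a1 (by linarith : 0 ≤ 1 - t)
    have b2 := mul_le_mul_of_nonneg_left a2 ht0
    linarith
  have a5 : 0 < (1 - t) * d.radius + t * e.radius := by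
    rcases ht0.lt_or_eq with h | h
    · have := mul_pos h he
      have := mul_nonneg (by linarith : 0 ≤ 1 - t) hd.le
      linarith
    · rw [← h]; linarith
  have a6 : f.radius ^ 2 < dist x f.center ^ 2 := by
    have := mul_pos hf a5
    nlinarith [sq_nonneg ((1 - t) * d.radius - t * e.radius)]
  exact lt_of_pow_lt_pow_left₀ 2 dist_nonneg a6

lemma edge_cov {d e : Disk} {x : Plane} (ht : d.Tangent e) (hx : OnEdge d.center e.center x) :
    dist x d.center ≤ d.radius ∨ dist x e.center ≤ e.radius := by
  obtain ⟨t, ht0, ht1, hx⟩ := hx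
  have hL := dist_sq d.center e.center
  unfold Disk.Tangent at ht
  rw [ht] at hL
  have hd := d.radius_pos
  have he := e.radius_pos
  have b1 : dist x d.center = t * (d.radius + e.radius) := by
    rw [← sq_eq_sq₀ dist_nonneg (by positivity), dist_sq, hx 0, hx 1, mul_pow, hL]
    ring
  have b2 : dist x e.center = (1 - t) * (d.radius + e.radius) := by
    rw [← sq_eq_sq₀ dist_nonneg (mul_nonneg (by linarith) (by positivity)), dist_sq, hx 0, hx 1,
      mul_pow, hL]
    ring
  by_contra! h
  linarith [h.1, h.2]

/-- triangle of mutually tangent disks -/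
structure Tri (P : Set Disk) (r : ℝ) (d e f : Disk) : Prop where
  hd : d ∈ P
  he : e ∈ P
  hf : f ∈ P
  de : d.Tangent e
  ef : e.Tangent f
  fd : f.Tangent d
  pos : 0 < SA d.center e.center f.center
  good : d.radius = r ∨ e.radius = r ∨ f.radius = r ∨ 4 < 3 * (1 + r) ^ 2

lemma Tri.rot {P : Set Disk} {r : ℝ} {d e f : Disk} (h : Tri P r d e f) : Tri P r e f d :=
  ⟨h.he, h.hf, h.hd, h.ef, h.fd, h.de, by rw [SA_rot]; exact h.pos, by
    have := h.good; tauto⟩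

lemma TT_rot {p q w x : Plane} (h : x ∈ TT p q w) : x ∈ TT q w p := ⟨h.2.1, h.2.2, h.1⟩

/-- the main inequality excluding a further center in a triangle -/
lemma var_ineq {r a b c x y z : ℝ} (hr : 0 < r) (hx : 0 ≤ x) (hy : 0 ≤ y) (hz : 0 ≤ z)
    (hs : x + y + z = 1) (ha : 0 < a) (hb : 0 < b) (hc : 0 < c) (hcr : c = r) :
    x * y * (a + b) ^ 2 + y * z * (b + c) ^ 2 + z * x * (c + a) ^ 2 <
      x * (a + r) ^ 2 + y * (b + r) ^ 2 + z * (c + r) ^ 2 := by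
  subst hcr
  have h1 : 0 ≤ x * a := by positivity
  have h2 : 0 ≤ y * b := by positivity
  have h3 : 0 ≤ (1 - z) * c * (x * a + y * b) := by
    have : 0 ≤ 1 - z := by linarith
    positivity
  have hz' : z = 1 - x - y := by linarith
  subst hz'
  nlinarith [sq_nonneg (x * a - y * b), sq_nonneg ((1 - x - y) * c), mul_pos hc hc,
    mul_nonneg hz (mul_pos hc hc).le]

lemma var_ineq' {r a b c x y z : ℝ} (hr : 0 < r) (hx : 0 ≤ x) (hy : 0 ≤ y) (hz : 0 ≤ z)
    (hs : x + y + z = 1) (ha : 0 < a) (hb : 0 < b) (hc : 0 < c) (ha1 : a ≤ 1) (hb1 : b ≤ 1)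
    (hc1 : c ≤ 1) (hg : 4 < 3 * (1 + r) ^ 2) :
    x * y * (a + b) ^ 2 + y * z * (b + c) ^ 2 + z * x * (c + a) ^ 2 <
      x * (a + r) ^ 2 + y * (b + r) ^ 2 + z * (c + r) ^ 2 := by
  set m := x * a + y * b + z * c with hm
  have hm0 : 0 ≤ m := by positivity
  have hm1 : m ≤ 1 := by
    have := mul_le_mul_of_nonneg_left ha1 hx
    have := mul_le_mul_of_nonneg_left hb1 hy
    have := mul_le_mul_of_nonneg_left hc1 hz
    linarith
  have key : x * (a + r) ^ 2 + y * (b + r) ^ 2 + z * (c + r) ^ 2 -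
      (x * y * (a + b) ^ 2 + y * z * (b + c) ^ 2 + z * x * (c + a) ^ 2)
      = 2 * r * m + r ^ 2 - m ^ 2 + 2 * ((x * a) ^ 2 + (y * b) ^ 2 + (z * c) ^ 2) := by
    have hz' : z = 1 - x - y := by linarith
    rw [hm, hz']
    ring
  have h2 : m ^ 2 ≤ 3 * ((x * a) ^ 2 + (y * b) ^ 2 + (z * c) ^ 2) := by
    rw [hm]
    nlinarith [sq_nonneg (x * a - y * b), sq_nonneg (y * b - z * c), sq_nonneg (x * a - z * c)]
  have h3 : m ^ 2 < 6 * r * m + 3 * r ^ 2 := by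
    nlinarith [mul_nonneg hm0 (by linarith : 0 ≤ 1 - m), mul_pos hr hr,
      mul_nonneg hr.le (by linarith : 0 ≤ 1 - m)]
  linarith

lemma no_center {P : Set Disk} {r : ℝ} (hr : 0 < r) (hS : DSep P) (hR : Rad P r) {d e f g : Disk}
    (h : Tri P r d e f) (hg : g ∈ P) (h1 : g ≠ d) (h2 : g ≠ e) (h3 : g ≠ f) :
    g.center ∉ TT d.center e.center f.center := by
  intro hT
  have hD := h.pos
  set D := SA d.center e.center f.center with hDd
  obtain ⟨t1, t2, t3⟩ := hT
  have hsum := SA_sum d.center e.center f.center g.center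
  have hb0 := SA_bary0 d.center e.center f.center g.center 0
  have hb1 := SA_bary0 d.center e.center f.center g.center 1
  obtain ⟨x, hx⟩ : ∃ x, x = SA e.center f.center g.center / D := ⟨_, rfl⟩
  obtain ⟨y, hy⟩ : ∃ y, y = SA f.center d.center g.center / D := ⟨_, rfl⟩
  obtain ⟨z, hz⟩ : ∃ z, z = SA d.center e.center g.center / D := ⟨_, rfl⟩
  have hx0 : 0 ≤ x := by rw [hx]; positivity
  have hy0 : 0 ≤ y := by rw [hy]; positivity
  have hz0 : 0 ≤ z := by rw [hz]; positivity
  have hs : x + y + z = 1 := by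
    rw [hx, hy, hz]; field_simp; linarith
  have e0 : g.center 0 = x * d.center 0 + y * e.center 0 + z * f.center 0 := by
    rw [hx, hy, hz]; field_simp; linarith
  have e1 : g.center 1 = x * d.center 1 + y * e.center 1 + z * f.center 1 := by
    rw [hx, hy, hz]; field_simp; linarith
  have hgr := (hR g hg).1
  have lo : ∀ k ∈ P, g ≠ k → (k.radius + r) ^ 2 ≤
      (k.center 0 - g.center 0) ^ 2 + (k.center 1 - g.center 1) ^ 2 := by
    intro k hk hne
    have := hS k hk g hg hne.symm
    have hkp := k.radius_pos
    rw [← dist_sq]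
    have : k.radius + r ≤ dist k.center g.center := by linarith
    gcongr
  have l1 := mul_le_mul_of_nonneg_left (lo d h.hd h1) hx0
  have l2 := mul_le_mul_of_nonneg_left (lo e h.he h2) hy0
  have l3 := mul_le_mul_of_nonneg_left (lo f h.hf h3) hz0
  have tan : ∀ k l : Disk, k.Tangent l → (k.radius + l.radius) ^ 2 =
      (k.center 0 - l.center 0) ^ 2 + (k.center 1 - l.center 1) ^ 2 := by
    intro k l hkl
    unfold Disk.Tangent at hkl
    rw [← dist_sq, hkl]
  have m1 := tan d e h.de
  have m2 := tan e f h.ef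
  have m3 := tan f d h.fd
  have hle : x * (d.radius + r) ^ 2 + y * (e.radius + r) ^ 2 + z * (f.radius + r) ^ 2 ≤
      x * y * (d.radius + e.radius) ^ 2 + y * z * (e.radius + f.radius) ^ 2
        + z * x * (f.radius + d.radius) ^ 2 := by
    rw [m1, m2, m3]
    rw [e0, e1] at l1 l2 l3
    have hz' : z = 1 - x - y := by linarith
    rw [hz'] at l1 l2 l3 ⊢
    refine (add_le_add (add_le_add l1 l2) l3).trans (le_of_eq ?_)
    ring
  rcases h.good with hh | hh | hh | hh
  · have := var_ineq hr hy0 hz0 hx0 (by linarith) e.radius_pos f.radius_pos d.radius_pos hh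
    linarith
  · have := var_ineq hr hz0 hx0 hy0 (by linarith) f.radius_pos d.radius_pos e.radius_pos hh
    linarith
  · have := var_ineq hr hx0 hy0 hz0 (by linarith) d.radius_pos e.radius_pos f.radius_pos hh
    linarith
  · have := var_ineq' hr hx0 hy0 hz0 hs d.radius_pos e.radius_pos f.radius_pos
      (hR d h.hd).2 (hR e h.he).2 (hR f h.hf).2 hh
    linarith

end

noncomputable section

/-- a disk of minimal power with respect to a point -/
lemma exists_min_power {P : Set Disk} {r : ℝ} (hr : 0 < r) (hS : DSep P) (hR : Rad P r)
    (hne : P.Nonempty) (x : Plane) : ∃ d ∈ P, ∀ e ∈ P,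
      dist d.center x ^ 2 - d.radius ^ 2 ≤ dist e.center x ^ 2 - e.radius ^ 2 := by
  obtain ⟨d0, h0⟩ := hne
  set K := dist d0.center x + 1 with hK
  have hd0 : (0 : ℝ) ≤ dist d0.center x := dist_nonneg
  obtain ⟨d, hd, hmin⟩ := Set.exists_min_image {d ∈ P | dist d.center x ≤ K}
    (fun d => dist d.center x ^ 2 - d.radius ^ 2) (finite_near hr hS hR x K)
    ⟨d0, h0, by linarith⟩
  refine ⟨d, hd.1, fun e he => ?_⟩
  by_cases hc : dist e.center x ≤ K
  · exact hmin e ⟨he, hc⟩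
  · push Not at hc
    have h1 := hmin d0 ⟨h0, by linarith⟩
    have h2 := (hR e he).2
    have h3 := e.radius_pos
    have h4 := d0.radius_pos
    nlinarith

lemma cone_alg {s t R R1 R2 a0 a1 b0 b1 c0 c1 : ℝ} (hs0 : 0 ≤ s) (ht0 : 0 ≤ t) (hst : 1 < s + t)
    (hd : 0 < R) (he : 0 < R1) (hf : 0 < R2)
    (m1 : (a0 - b0) ^ 2 + (a1 - b1) ^ 2 = (R + R1) ^ 2)
    (m2 : (b0 - c0) ^ 2 + (b1 - c1) ^ 2 = (R1 + R2) ^ 2)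
    (m3 : (c0 - a0) ^ 2 + (c1 - a1) ^ 2 = (R2 + R) ^ 2)
    (q1 : s * ((a0 - ((1 - s - t) * a0 + s * b0 + t * c0)) ^ 2 +
        (a1 - ((1 - s - t) * a1 + s * b1 + t * c1)) ^ 2 - R ^ 2) ≤
      s * ((b0 - ((1 - s - t) * a0 + s * b0 + t * c0)) ^ 2 +
        (b1 - ((1 - s - t) * a1 + s * b1 + t * c1)) ^ 2 - R1 ^ 2))
    (q2 : t * ((a0 - ((1 - s - t) * a0 + s * b0 + t * c0)) ^ 2 +
        (a1 - ((1 - s - t) * a1 + s * b1 + t * c1)) ^ 2 - R ^ 2) ≤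
      t * ((c0 - ((1 - s - t) * a0 + s * b0 + t * c0)) ^ 2 +
        (c1 - ((1 - s - t) * a1 + s * b1 + t * c1)) ^ 2 - R2 ^ 2)) : False := by
  have q3 : (s + t) ^ 2 * R ^ 2 + 2 * R * (s + t) * (s * R1 + t * R2) + (s * R1 - t * R2) ^ 2
      ≤ R * ((s + t) * R + (s * R1 + t * R2)) := by
    linear_combination (1/2) * q1 + (1/2) * q2 + (s / 2 - s * (s + t)) * m1
      + (t / 2 - t * (s + t)) * m3 + s * t * m2
  have q4 : 0 ≤ s * R1 + t * R2 := by positivity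
  have q5 : 0 < (s + t) * (s + t - 1) * R ^ 2 := by
    have : 0 < s + t - 1 := by linarith
    have : 0 < s + t := by linarith
    positivity
  have q6 : 0 ≤ R * (2 * (s + t) - 1) * (s * R1 + t * R2) := by
    have : 0 ≤ 2 * (s + t) - 1 := by linarith
    positivity
  linarith [sq_nonneg (s * R1 - t * R2)]

/-- the cone at a power minimizing disk can be cut down to the triangle -/
lemma mem_TT {P : Set Disk} {r : ℝ} {d e f : Disk} (h : Tri P r d e f) {x : Plane}
    (hmin : ∀ k ∈ P, dist d.center x ^ 2 - d.radius ^ 2 ≤ dist k.center x ^ 2 - k.radius ^ 2)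
    (h1 : 0 ≤ SA d.center e.center x) (h2 : 0 ≤ SA f.center d.center x) :
    x ∈ TT d.center e.center f.center := by
  refine ⟨h1, ?_, h2⟩
  by_contra! hneg
  have hD := h.pos
  set D := SA d.center e.center f.center with hDd
  have hsum := SA_sum d.center e.center f.center x
  have hb0 := SA_bary0 d.center e.center f.center x 0
  have hb1 := SA_bary0 d.center e.center f.center x 1
  obtain ⟨s, hs⟩ : ∃ s, s = SA f.center d.center x / D := ⟨_, rfl⟩
  obtain ⟨t, ht⟩ : ∃ t, t = SA d.center e.center x / D := ⟨_, rfl⟩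
  have hs0 : 0 ≤ s := by rw [hs]; positivity
  have ht0 : 0 ≤ t := by rw [ht]; positivity
  have hst : 1 < s + t := by
    rw [hs, ht, ← add_div, lt_div_iff₀ hD]; linarith
  have hss : SA e.center f.center x = D - D * s - D * t := by
    rw [hs, ht]; field_simp; linarith
  have e0 : x 0 = (1 - s - t) * d.center 0 + s * e.center 0 + t * f.center 0 := by
    have : D * x 0 = D * ((1 - s - t) * d.center 0 + s * e.center 0 + t * f.center 0) := by
      rw [hb0, hss, show SA f.center d.center x = D * s by rw [hs]; field_simp,
        show SA d.center e.center x = D * t by rw [ht]; field_simp]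
      ring
    exact mul_left_cancel₀ hD.ne' this
  have e1 : x 1 = (1 - s - t) * d.center 1 + s * e.center 1 + t * f.center 1 := by
    have : D * x 1 = D * ((1 - s - t) * d.center 1 + s * e.center 1 + t * f.center 1) := by
      rw [hb1, hss, show SA f.center d.center x = D * s by rw [hs]; field_simp,
        show SA d.center e.center x = D * t by rw [ht]; field_simp]
      ring
    exact mul_left_cancel₀ hD.ne' this
  have p1 := hmin e h.he
  have p2 := hmin f h.hf
  have tan : ∀ k l : Disk, k.Tangent l → 
      (k.center 0 - l.center 0) ^ 2 + (k.center 1 - l.center 1) ^ 2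
       = (k.radius + l.radius) ^ 2 := by
    intro k l hkl
    unfold Disk.Tangent at hkl
    rw [← dist_sq, hkl]
  have m1 := tan d e h.de
  have m2 := tan e f h.ef
  have m3 := tan f d h.fd
  rw [dist_sq, dist_sq, e0, e1] at p1 p2
  have hd := d.radius_pos
  have he := e.radius_pos
  have hf := f.radius_pos
  obtain ⟨R, hRR⟩ : ∃ R, R = d.radius := ⟨_, rfl⟩
  obtain ⟨R1, hR1⟩ : ∃ R, R = e.radius := ⟨_, rfl⟩
  obtain ⟨R2, hR2⟩ : ∃ R, R = f.radius := ⟨_, rfl⟩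
  rw [← hRR] at hd
  rw [← hR1] at he
  rw [← hR2] at hf
  rw [← hRR, ← hR1] at m1
  rw [← hR2, ← hR1] at m2
  rw [← hRR, ← hR2] at m3
  rw [← hRR, ← hR1] at p1
  rw [← hRR, ← hR2] at p2
  have q1 := mul_le_mul_of_nonneg_left p1 hs0
  have q2 := mul_le_mul_of_nonneg_left p2 ht0
  exact cone_alg hs0 ht0 hst hd he hf m1 m2 m3 q1 q2

lemma not_mem_TO_cov {P : Set Disk} {r : ℝ} {d e f : Disk} (h : Tri P r d e f) {x : Plane}
    (hx : x ∈ TT d.center e.center f.center) (hxP : x ∉ packingUnion P) :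
    x ∈ TO d.center e.center f.center := by
  by_contra hn
  apply hxP
  rw [_root_.mem_union]
  rcases edge_cases h.pos hx hn with hh | hh | hh
  · rcases edge_cov h.de hh with k | k
    exacts [⟨d, h.hd, k⟩, ⟨e, h.he, k⟩]
  · rcases edge_cov h.ef hh with k | k
    exacts [⟨e, h.he, k⟩, ⟨f, h.hf, k⟩]
  · rcases edge_cov h.fd hh with k | k
    exacts [⟨f, h.hf, k⟩, ⟨d, h.hd, k⟩]

lemma comp_sub_TO {P : Set Disk} {r : ℝ} {d e f : Disk} (h : Tri P r d e f) {x : Plane}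
    (hx : x ∈ TT d.center e.center f.center) (hxP : x ∉ packingUnion P) :
    connectedComponentIn (packingUnion P)ᶜ x ⊆ TO d.center e.center f.center := by
  refine isPreconnected_connectedComponentIn.subset_of_closure_inter_subset (TO_open _ _ _)
    ⟨x, mem_connectedComponentIn hxP, not_mem_TO_cov h hx hxP⟩ ?_
  rintro y ⟨hy, hyC⟩
  exact not_mem_TO_cov h (TO_closure _ _ _ hy) (connectedComponentIn_subset _ _ hyC)

lemma others_miss {P : Set Disk} {r : ℝ} (hr : 0 < r) (hS : DSep P) (hR : Rad P r) {d e f : Disk}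
    (h : Tri P r d e f) {x : Plane}
    (hx : x ∈ TT d.center e.center f.center) (hxP : x ∉ packingUnion P) {g : Disk} (hg : g ∈ P)
    (hm : (closure (connectedComponentIn (packingUnion P)ᶜ x) ∩ g.set).Nonempty) :
    g = d ∨ g = e ∨ g = f := by
  by_contra! hne
  obtain ⟨h1, h2, h3⟩ := hne
  have hc := no_center hr hS hR h hg h1 h2 h3
  obtain ⟨p, hp, hpg⟩ := hm
  have hpT : p ∈ TT d.center e.center f.center :=
    TO_closure _ _ _ (closure_mono (comp_sub_TO h hx hxP) hp)
  obtain ⟨q, hq, hqT, hqO⟩ : ∃ q ∈ segment ℝ p g.center, q ∈ TT d.center e.center f.center ∧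
      q ∉ TO d.center e.center f.center := by
    by_contra! hcon
    have hpO := hcon p (left_mem_segment _ _ _) hpT
    have := (convex_segment p g.center).isPreconnected.subset_of_closure_inter_subset
      (TO_open d.center e.center f.center) ⟨p, left_mem_segment _ _ _, hpO⟩ (by
        rintro y ⟨hy, hyS⟩
        exact hcon y hyS (TO_closure _ _ _ hy))
    exact hc (TO_sub _ _ _ (this (right_mem_segment _ _ _)))
  have hqd : dist q g.center ≤ g.radius :=
    (convex_closedBall g.center g.radius).segment_subset hpg
      (mem_closedBall_self g.radius_pos.le) hq
  rcases edge_cases h.pos hqT hqO with hh | hh | hh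
  · exact absurd hqd (edge_far h.de (hS d h.hd g hg h1.symm) (hS e h.he g hg h2.symm) hh).not_ge
  · exact absurd hqd (edge_far h.ef (hS e h.he g hg h2.symm) (hS f h.hf g hg h3.symm) hh).not_ge
  · exact absurd hqd (edge_far h.fd (hS f h.hf g hg h3.symm) (hS d h.hd g hg h1.symm) hh).not_ge

lemma ray_avoid {d e : Disk} {x : Plane} (hS1 : 0 < SA d.center e.center x)
    (hxd : d.radius < dist x d.center) (hxe : e.radius < dist x e.center) {τ : ℝ} (hτ : 0 ≤ τ) :
    let y : Plane := x + τ • !₂[-(e.center 1 - d.center 1), e.center 0 - d.center 0]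
    d.radius < dist y d.center ∧ e.radius < dist y e.center := by
  intro y
  have y0 : y 0 = x 0 - τ * (e.center 1 - d.center 1) := by simp [y]; ring
  have y1 : y 1 = x 1 + τ * (e.center 0 - d.center 0) := by simp [y]
  unfold SA at hS1
  have hm := mul_nonneg hτ hS1.le
  refine ⟨hxd.trans_le (le_of_sq_le_sq ?_ dist_nonneg), hxe.trans_le (le_of_sq_le_sq ?_ dist_nonneg)⟩
  · rw [dist_sq, dist_sq, y0, y1]
    nlinarith [sq_nonneg (τ * (e.center 1 - d.center 1)), sq_nonneg (τ * (e.center 0 - d.center 0))]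
  · rw [dist_sq, dist_sq, y0, y1]
    nlinarith [sq_nonneg (τ * (e.center 1 - d.center 1)), sq_nonneg (τ * (e.center 0 - d.center 0))]

lemma first_meets {P : Set Disk} {r : ℝ} (hr : 0 < r) (hS : DSep P) (hR : Rad P r) {d e f : Disk}
    (h : Tri P r d e f) {x : Plane}
    (hx : x ∈ TT d.center e.center f.center) (hxP : x ∉ packingUnion P) :
    (closure (connectedComponentIn (packingUnion P)ᶜ x) ∩ f.set).Nonempty := by
  by_contra hno
  have hxO := not_mem_TO_cov h hx hxP
  have hnu : ∀ k ∈ P, k.radius < dist x k.center := by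
    intro k hk
    by_contra! hle
    exact hxP (_root_.mem_union.2 ⟨k, hk, hle⟩)
  have hav := fun τ hτ => ray_avoid (τ := τ) hxO.1 (hnu d h.hd) (hnu e h.he) hτ
  simp only at hav
  set n : Plane := !₂[-(e.center 1 - d.center 1), e.center 0 - d.center 0] with hn
  have hsub := escape (closed_union hr hS hR subset_rfl) x ((fun τ : ℝ => x + τ • n) '' Ici 0)
    ((convex_Ici (0 : ℝ)).isPreconnected.image _ (by fun_prop))
    ⟨x, ⟨0, by simp, by simp⟩, mem_connectedComponentIn hxP⟩ (by
      rintro g hg hm _ ⟨τ, hτ, rfl⟩ hy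
      rcases others_miss hr hS hR h hx hxP hg hm with rfl | rfl | rfl
      · exact absurd hy (hav τ hτ).1.not_ge
      · exact absurd hy (hav τ hτ).2.not_ge
      · exact hno hm)
  have hL : 0 < (e.center 0 - d.center 0) ^ 2 + (e.center 1 - d.center 1) ^ 2 := by
    rw [← dist_sq]
    have := h.de
    unfold Disk.Tangent at this
    rw [dist_comm, this]
    have := d.radius_pos
    have := e.radius_pos
    positivity
  have hD := h.pos
  set τ := SA d.center e.center f.center /
    ((e.center 0 - d.center 0) ^ 2 + (e.center 1 - d.center 1) ^ 2) with hτ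
  have hτ0 : 0 ≤ τ := by positivity
  have hτe : τ * ((e.center 0 - d.center 0) ^ 2 + (e.center 1 - d.center 1) ^ 2) =
      SA d.center e.center f.center := by rw [hτ]; field_simp
  have hy := comp_sub_TO h hx hxP (hsub ⟨τ, hτ0, rfl⟩)
  have hs := SA_sum d.center e.center f.center (x + τ • n)
  have hv : SA d.center e.center (x + τ • n) = SA d.center e.center x +
      SA d.center e.center f.center := by
    rw [← hτe]
    unfold SA
    simp [hn]
    ring
  have := hy.2.1
  have := hy.2.2
  have := hxO.1
  simp only at *
  linarith

lemma TT_bounded {p q w : Plane} (hD : 0 < SA p q w) : Bornology.IsBounded (TT p q w) := by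
  refine (isBounded_iff_forall_norm_le).2 ⟨‖p‖ + ‖q‖ + ‖w‖, ?_⟩
  intro x hx
  obtain ⟨h1, h2, h3⟩ := hx
  have hs := SA_sum p q w x
  have : x = (SA q w x / SA p q w) • p + (SA w p x / SA p q w) • q +
      (SA p q x / SA p q w) • w := by
    ext i
    have := SA_bary0 p q w x i
    simp
    field_simp
    linarith
  have hle : ∀ a : ℝ, 0 ≤ a → a ≤ SA p q w → ∀ v : Plane, ‖(a / SA p q w) • v‖ ≤ ‖v‖ := by
    intro a ha ha' v
    rw [norm_smul, Real.norm_of_nonneg (by positivity)]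
    exact mul_le_of_le_one_left (norm_nonneg _) ((div_le_one hD).2 ha')
  rw [this]
  exact norm_add₃_le.trans (add_le_add (add_le_add (hle _ h2 (by linarith) _)
    (hle _ h3 (by linarith) _)) (hle _ h1 (by linarith) _))

theorem compact_of_cones {P : Set Disk} {r : ℝ} (hr : 0 < r) (hS : DSep P) (hR : Rad P r)
    (hne : P.Nonempty) (hcone : ∀ d ∈ P, ∀ x : Plane, ∃ e f, Tri P r d e f ∧
      0 ≤ SA d.center e.center x ∧ 0 ≤ SA f.center d.center x) : IsCompactPacking P := by
  refine ⟨(isPacking_iff_sep P).2 hS, ?_⟩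
  intro x hxP
  obtain ⟨d, hd, hmin⟩ := exists_min_power hr hS hR hne x
  obtain ⟨e, f, h, h1, h2⟩ := hcone d hd x
  have hx := mem_TT h hmin h1 h2
  refine ⟨(TT_bounded h.pos).subset ((comp_sub_TO h hx hxP).trans (TO_sub _ _ _)), d, e, f, h.hd,
    h.he, h.hf, ?_, ?_, ?_, h.de, h.fd.symm, h.ef, ?_⟩
  · rintro rfl
    have := h.de
    unfold Disk.Tangent at this
    rw [dist_self] at this
    linarith [d.radius_pos]
  · rintro rfl
    have := h.fd
    unfold Disk.Tangent at this
    rw [dist_self] at this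
    linarith [d.radius_pos]
  · rintro rfl
    have := h.ef
    unfold Disk.Tangent at this
    rw [dist_self] at this
    linarith [e.radius_pos]
  · ext g
    constructor
    · rintro ⟨hg, hm⟩
      exact others_miss hr hS hR h hx hxP hg hm
    · rintro (rfl | rfl | rfl)
      · exact ⟨h.hd, first_meets hr hS hR h.rot (TT_rot hx) hxP⟩
      · exact ⟨h.he, first_meets hr hS hR h.rot.rot (TT_rot (TT_rot hx)) hxP⟩
      · exact ⟨h.hf, first_meets hr hS hR h hx hxP⟩

end

noncomputable section

/-- cones spanned by a finite family of vectors, each with a successor, cover the plane -/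
lemma cone_cover {α : Type*} (S : Finset α) (hne : S.Nonempty) (a b : α → ℝ)
    (Q : α → α → Prop)
    (hQ : ∀ i ∈ S, ∃ j ∈ S, 0 < a i * b j - b i * a j ∧ Q i j) (x y : ℝ) :
    ∃ i ∈ S, ∃ j ∈ S, (0 < a i * b j - b i * a j ∧ Q i j) ∧ 0 ≤ a i * y - b i * x ∧
      0 ≤ x * b j - y * a j := by
  choose! σ hσ using hQ
  by_cases h0 : x = 0 ∧ y = 0
  · obtain ⟨rfl, rfl⟩ := h0
    obtain ⟨i, hi⟩ := hne
    exact ⟨i, hi, σ i, (hσ i hi).1, (hσ i hi).2, by simp, by simp⟩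
  have hpos : 0 < x ^ 2 + y ^ 2 := by
    by_contra! hle
    have h1 := sq_nonneg x
    have h2 := sq_nonneg y
    exact h0 ⟨pow_eq_zero_iff (two_ne_zero) |>.1 (by linarith),
      pow_eq_zero_iff (two_ne_zero) |>.1 (by linarith)⟩
  by_contra! hcon
  have hstep : ∀ i ∈ S, 0 ≤ a i * y - b i * x → 0 < a (σ i) * y - b (σ i) * x := by
    intro i hi h
    have := hcon i hi (σ i) (hσ i hi).1 (hσ i hi).2 h
    linarith
  have key : ∀ T : Finset α, T ⊆ S → T.Nonempty → (∀ i ∈ T, σ i ∈ T) →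
      (∀ i ∈ T, ∀ j ∈ T, 0 < (a i * y - b i * x) * (a j * y - b j * x)) → False := by
    intro T hTS hT hTσ hsgn
    obtain ⟨i, hi, hmax⟩ := T.exists_max_image
      (fun i => (a i * x + b i * y) / (a i * y - b i * x)) hT
    have h1 := hmax (σ i) (hTσ i hi)
    have h2 := hsgn i hi (σ i) (hTσ i hi)
    have h3 := (hσ i (hTS hi)).2.1
    have n1 : a i * y - b i * x ≠ 0 := by
      intro h; rw [h] at h2; simp at h2
    have n2 : a (σ i) * y - b (σ i) * x ≠ 0 := by
      intro h; rw [h] at h2; simp at h2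
    have h4 : (a (σ i) * x + b (σ i) * y) / (a (σ i) * y - b (σ i) * x)
      - (a i * x + b i * y) / (a i * y - b i * x) =
      (x ^ 2 + y ^ 2) * (a i * b (σ i) - b i * a (σ i)) /
        ((a i * y - b i * x) * (a (σ i) * y - b (σ i) * x)) := by
      rw [div_sub_div _ _ n2 n1, div_eq_div_iff (mul_ne_zero n2 n1) (mul_ne_zero n1 n2)]
      ring
    have h5 : 0 < (x ^ 2 + y ^ 2) * (a i * b (σ i) - b i * a (σ i)) /
        ((a i * y - b i * x) * (a (σ i) * y - b (σ i) * x)) := by positivity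
    linarith
  by_cases hex : ∃ i ∈ S, 0 ≤ a i * y - b i * x
  · obtain ⟨i, hi, hge⟩ := hex
    classical
    refine key (S.filter (fun i => 0 < a i * y - b i * x)) (Finset.filter_subset _ _)
      ⟨σ i, ?_⟩ ?_ ?_
    · exact Finset.mem_filter.2 ⟨(hσ i hi).1, hstep i hi hge⟩
    · intro j hj
      obtain ⟨hj, hj'⟩ := Finset.mem_filter.1 hj
      exact Finset.mem_filter.2 ⟨(hσ j hj).1, hstep j hj hj'.le⟩
    · intro j hj l hl
      exact mul_pos (Finset.mem_filter.1 hj).2 (Finset.mem_filter.1 hl).2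
  · push Not at hex
    exact key S subset_rfl hne (fun i hi => (hσ i hi).1)
      (fun i hi j hj => mul_pos_of_neg_of_neg (hex i hi) (hex j hj))

/-- integer data describing approximately a doubly periodic packing, with its list of edges -/
structure Apx where
  k : ℕ
  N : ℤ
  X : List ℤ
  Y : List ℤ
  S : List Bool
  U : ℤ
  V : ℤ
  W : ℤ
  R : ℤ
  M0 : ℕ
  N0 : ℕ
  E : List (ℕ × ℕ × ℤ × ℤ)
  L : Bool

namespace Apx

def sm (A : Apx) (i : ℕ) : Bool := A.S.getD i false
def rho (A : Apx) (i : ℕ) : ℤ := if A.sm i then A.R else A.N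
def wx (A : Apx) (i j : ℕ) (m n : ℤ) : ℤ := A.X.getD j 0 - A.X.getD i 0 + m * A.U + n * A.V
def wy (A : Apx) (i j : ℕ) (_m n : ℤ) : ℤ := A.Y.getD j 0 - A.Y.getD i 0 + n * A.W
def eps (A : Apx) : ℤ := 2 + A.M0 + A.N0
def rng (n : ℕ) : List ℤ := (List.range (2 * n + 1)).map (fun i : ℕ => (i : ℤ) - n)
def tE (A : Apx) (i j : ℕ) (m n : ℤ) : Bool :=
  A.E.any fun e => (e.1 == i && e.2.1 == j && e.2.2.1 == m && e.2.2.2 == n) ||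
    (e.1 == j && e.2.1 == i && e.2.2.1 == -m && e.2.2.2 == -n)
def far (A : Apx) (i j : ℕ) (m n : ℤ) : Bool :=
  decide ((A.rho i + A.rho j + 2) ^ 2 ≤
    (max ((A.wx i j m n).natAbs - A.eps) 0) ^ 2 + (max ((A.wy i j m n).natAbs - A.eps) 0) ^ 2)
def inr (A : Apx) (m n : ℤ) : Bool := decide (m.natAbs ≤ A.M0) && decide (n.natAbs ≤ A.N0)
def nbr (A : Apx) (i : ℕ) : List (ℕ × ℤ × ℤ) :=
  (A.E.filter (fun e => e.1 == i)).map (fun e => (e.2.1, e.2.2.1, e.2.2.2)) ++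
  (A.E.filter (fun e => e.2.1 == i)).map (fun e => (e.1, -e.2.2.1, -e.2.2.2))
def crs (A : Apx) (i : ℕ) (p q : ℕ × ℤ × ℤ) : Bool :=
  let a := A.wx i p.1 p.2.1 p.2.2
  let b := A.wy i p.1 p.2.1 p.2.2
  let c := A.wx i q.1 q.2.1 q.2.2
  let d := A.wy i q.1 q.2.1 q.2.2
  decide (A.eps * (a.natAbs + b.natAbs + c.natAbs + d.natAbs) + 2 * A.eps ^ 2 < a * d - b * c)
def suc (A : Apx) (i : ℕ) (p q : ℕ × ℤ × ℤ) : Bool :=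
  A.crs i p q && A.tE p.1 q.1 (q.2.1 - p.2.1) (q.2.2 - p.2.2) &&
    (A.sm i || A.sm p.1 || A.sm q.1 || A.L)
def ckSep (A : Apx) : Bool :=
  (List.range A.k).all fun i => (List.range A.k).all fun j => (rng A.M0).all fun m =>
    (rng A.N0).all fun n =>
      (i == j && m == 0 && n == 0) || A.far i j m n || A.tE i j m n
def ckOut (A : Apx) : Bool :=
  (List.range A.k).all fun i => (List.range A.k).all fun j =>
    decide (2 * A.N + 2 + (A.Y.getD j 0 - A.Y.getD i 0).natAbs ≤ (A.N0 + 1) * (A.W - 1)) &&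
    (rng A.N0).all fun n =>
      decide (2 * A.N + 2 + A.N0 + (A.X.getD j 0 - A.X.getD i 0 + n * A.V).natAbs ≤
        (A.M0 + 1) * (A.U - 1))
def ckCone (A : Apx) : Bool :=
  (List.range A.k).all fun i => !(A.nbr i).isEmpty &&
    (A.nbr i).all fun p => (A.nbr i).any fun q => A.suc i p q
def ckMisc (A : Apx) : Bool :=
  decide (0 < A.N) && decide (1 < A.R) && decide (A.R + 1 < A.N) && decide (1 < A.U) &&
    decide (1 < A.W) &&
    (A.E.all fun e => A.inr e.2.2.1 e.2.2.2 && decide (e.1 < A.k) && decide (e.2.1 < A.k)) &&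
    ((List.range A.k).any fun i => A.sm i) && ((List.range A.k).any fun i => !A.sm i) &&
    (!A.L || decide (4 * A.N ^ 2 < 3 * (A.N + A.R - 1) ^ 2))
def ck (A : Apx) : Bool := A.ckMisc && A.ckOut && A.ckCone && A.ckSep

end Apx

/-- real data of a doubly periodic packing approximated by `A` -/
structure Real9 (A : Apx) where
  X : ℕ → ℝ
  Y : ℕ → ℝ
  u : ℝ
  v : ℝ
  w : ℝ
  r : ℝ
  hX : ∀ i < A.k, |A.N * X i - (A.X.getD i 0 : ℤ)| ≤ 1
  hY : ∀ i < A.k, |A.N * Y i - (A.Y.getD i 0 : ℤ)| ≤ 1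
  hu : |A.N * u - A.U| ≤ 1
  hv : |A.N * v - A.V| ≤ 1
  hw : |A.N * w - A.W| ≤ 1
  hr : |A.N * r - A.R| ≤ 1
  hE : ∀ e ∈ A.E, (X e.2.1 - X e.1 + e.2.2.1 * u + e.2.2.2 * v) ^ 2 +
    (Y e.2.1 - Y e.1 + e.2.2.2 * w) ^ 2 =
      ((if A.sm e.1 then r else 1) + (if A.sm e.2.1 then r else 1)) ^ 2

namespace Real9

variable {A : Apx} (B : Real9 A)

def rho (i : ℕ) : ℝ := if A.sm i then B.r else 1
def wx (i j : ℕ) (m n : ℤ) : ℝ := B.X j - B.X i + m * B.u + n * B.v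
def wy (i j : ℕ) (n : ℤ) : ℝ := B.Y j - B.Y i + n * B.w
def pos (i : ℕ) (m n : ℤ) : Plane := !₂[B.X i + m * B.u + n * B.v, B.Y i + n * B.w]

lemma mem_rng {n : ℕ} {m : ℤ} (h : m.natAbs ≤ n) : m ∈ Apx.rng n := by
  unfold Apx.rng
  rw [List.mem_map]
  exact ⟨(m + n).toNat, by rw [List.mem_range]; omega, by omega⟩

lemma err_x {i j : ℕ} {m n : ℤ} (hi : i < A.k) (hj : j < A.k) (hm : m.natAbs ≤ A.M0)
    (hn : n.natAbs ≤ A.N0) : |A.N * B.wx i j m n - A.wx i j m n| ≤ A.eps := by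
  have h1 := abs_le.1 (B.hX i hi)
  have h2 := abs_le.1 (B.hX j hj)
  have h3 : |(m : ℝ) * (A.N * B.u - A.U)| ≤ A.M0 := by
    rw [abs_mul]
    have : |(m : ℝ)| ≤ A.M0 := by
      rw [← Int.cast_abs, Int.abs_eq_natAbs]; exact_mod_cast hm
    exact (mul_le_mul this B.hu (abs_nonneg _) (by positivity)).trans (by simp)
  have h4 : |(n : ℝ) * (A.N * B.v - A.V)| ≤ A.N0 := by
    rw [abs_mul]
    have : |(n : ℝ)| ≤ A.N0 := by
      rw [← Int.cast_abs, Int.abs_eq_natAbs]; exact_mod_cast hn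
    exact (mul_le_mul this B.hv (abs_nonneg _) (by positivity)).trans (by simp)
  rw [abs_le] at h3 h4 ⊢
  unfold wx Apx.wx Apx.eps
  push_cast
  constructor <;> linarith

lemma err_y {i j : ℕ} {m n : ℤ} (hi : i < A.k) (hj : j < A.k) 
    (hn : n.natAbs ≤ A.N0) : |A.N * B.wy i j n - A.wy i j m n| ≤ A.eps := by
  have h1 := abs_le.1 (B.hY i hi)
  have h2 := abs_le.1 (B.hY j hj)
  have h4 : |(n : ℝ) * (A.N * B.w - A.W)| ≤ A.N0 := by
    rw [abs_mul]
    have : |(n : ℝ)| ≤ A.N0 := by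
      rw [← Int.cast_abs, Int.abs_eq_natAbs]; exact_mod_cast hn
    exact (mul_le_mul this B.hw (abs_nonneg _) (by positivity)).trans (by simp)
  have h5 : (0 : ℝ) ≤ A.M0 := by positivity
  rw [abs_le] at h4 ⊢
  unfold wy Apx.wy Apx.eps
  push_cast
  constructor <;> linarith

lemma tangent_of_tE {i j : ℕ} {m n : ℤ} (h : A.tE i j m n = true) :
    B.wx i j m n ^ 2 + B.wy i j n ^ 2 = (B.rho i + B.rho j) ^ 2 := by
  unfold Apx.tE at h
  rw [List.any_eq_true] at h
  obtain ⟨⟨a, b, c, d⟩, he, h⟩ := h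
  have := B.hE _ he
  simp only [Bool.or_eq_true, Bool.and_eq_true, beq_iff_eq] at h this
  unfold wx wy rho
  rcases h with ⟨⟨⟨rfl, rfl⟩, rfl⟩, rfl⟩ | ⟨⟨⟨rfl, rfl⟩, rfl⟩, rfl⟩
  · exact this
  · push_cast at this
    linear_combination this

lemma abs_lower {N x : ℝ} {a e : ℤ} (hN : 0 < N) (h : |N * x - a| ≤ e) :
    ((max ((a.natAbs : ℤ) - e) 0 : ℤ) : ℝ) ≤ N * |x| := by
  push_cast
  refine max_le ?_ (by positivity)
  rw [← abs_of_pos hN, ← abs_mul]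
  have := abs_sub_abs_le_abs_sub (a : ℝ) (N * x)
  rw [abs_sub_comm] at this
  linarith


lemma ck_misc (h : A.ckMisc = true) : 0 < A.N ∧ 1 < A.R ∧ A.R + 1 < A.N ∧ 1 < A.U ∧ 1 < A.W ∧
    (∀ e ∈ A.E, e.2.2.1.natAbs ≤ A.M0 ∧ e.2.2.2.natAbs ≤ A.N0 ∧ e.1 < A.k ∧ e.2.1 < A.k) ∧
    (∃ i < A.k, A.sm i = true) ∧ (∃ i < A.k, A.sm i = false) ∧
    (A.L = true → 4 * A.N ^ 2 < 3 * (A.N + A.R - 1) ^ 2) := by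
  unfold Apx.ckMisc Apx.inr at h
  simp only [Bool.and_eq_true, decide_eq_true_eq, List.all_eq_true, List.any_eq_true,
    List.mem_range, Bool.or_eq_true, Bool.not_eq_true'] at h
  obtain ⟨⟨⟨⟨⟨⟨⟨⟨h1, h2⟩, h3⟩, h4⟩, h5⟩, h6⟩, h7⟩, h8⟩, h9⟩ := h
  refine ⟨h1, h2, h3, h4, h5, fun e he => ?_, h7, h8, fun hL => ?_⟩
  · obtain ⟨⟨⟨a, b⟩, c⟩, d⟩ := h6 e he
    exact ⟨a, b, c, d⟩
  · rcases h9 with h9 | h9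
    · rw [hL] at h9; cases h9
    · exact h9

lemma rho_le (h0 : 0 < A.N) (i : ℕ) : A.N * B.rho i ≤ A.rho i + 1 := by
  unfold rho Apx.rho
  have := (abs_le.1 B.hr).2
  split_ifs <;> linarith

lemma r_pos (h : A.ckMisc = true) : 0 < B.r := by
  obtain ⟨h1, h2, -⟩ := ck_misc h
  have h1' : (0 : ℝ) < A.N := by exact_mod_cast h1
  have h2' : (1 : ℝ) < A.R := by exact_mod_cast h2
  have := (abs_le.1 B.hr).1
  by_contra! hle
  nlinarith

lemma r_lt (h : A.ckMisc = true) : B.r < 1 := by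
  obtain ⟨h1, h2, h3, -⟩ := ck_misc h
  have h1' : (0 : ℝ) < A.N := by exact_mod_cast h1
  have h2' : (A.R + 1 : ℝ) < A.N := by exact_mod_cast h3
  have := (abs_le.1 B.hr).2
  by_contra! hle
  nlinarith

lemma rho_pos (h : A.ckMisc = true) (i : ℕ) : 0 < B.rho i := by
  have := B.r_pos h
  unfold rho
  split_ifs <;> linarith

lemma rho_le_one (h : A.ckMisc = true) (i : ℕ) : B.rho i ≤ 1 := by
  have := B.r_lt h
  unfold rho
  split_ifs <;> linarith

lemma abs_far {N u x : ℝ} {U a m c : ℤ} {M0 : ℕ} (hN : 0 < N) (hU : 1 < U) (hu : |N * u - U| ≤ 1)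
    (hx : |N * x - a| ≤ c) (hm : M0 + 1 ≤ m.natAbs)
    (h : 2 * N + c + (a.natAbs : ℤ) ≤ (M0 + 1) * (U - 1)) : 2 ≤ |x + m * u| := by
  have hU' : (1 : ℝ) < U := by exact_mod_cast hU
  have h1 : ((M0 : ℝ) + 1) * (U - 1) ≤ N * |m * u| := by
    rw [abs_mul]
    have e1 : (M0 : ℝ) + 1 ≤ |(m : ℝ)| := by
      rw [← Int.cast_abs, Int.abs_eq_natAbs]; exact_mod_cast hm
    have e2 : (U : ℝ) - 1 ≤ N * |u| := by
      have := (abs_le.1 hu).1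
      have := mul_le_mul_of_nonneg_left (le_abs_self u) hN.le
      linarith
    have := mul_le_mul e1 e2 (by linarith) (abs_nonneg _)
    linarith
  have h2 : N * |x| ≤ (a.natAbs : ℤ) + c := by
    have := abs_sub_abs_le_abs_sub (N * x) (a : ℝ)
    rw [abs_mul, abs_of_pos hN] at this
    have e : ((a.natAbs : ℤ) : ℝ) = |(a : ℝ)| := by
      rw [← Int.abs_eq_natAbs, Int.cast_abs]
    rw [e]
    linarith
  have h3 : |m * u| ≤ |x + m * u| + |x| := by
    have := abs_sub (x + m * u) x
    simpa using this
  have h4 := mul_le_mul_of_nonneg_left h3 hN.le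
  have h5 : N * 2 ≤ N * |x + m * u| := by linarith
  exact le_of_mul_le_mul_left h5 hN

lemma sep (h : A.ck = true) {i j : ℕ} (m n : ℤ) (hi : i < A.k) (hj : j < A.k) :
    (i = j ∧ m = 0 ∧ n = 0) ∨ (B.rho i + B.rho j) ^ 2 ≤ B.wx i j m n ^ 2 + B.wy i j n ^ 2 := by
  unfold Apx.ck at h
  simp only [Bool.and_eq_true] at h
  obtain ⟨⟨⟨hM, hO⟩, -⟩, hS⟩ := h
  obtain ⟨h1, h2, h3, h4, h5, -⟩ := ck_misc hM
  have hN : (0 : ℝ) < A.N := by exact_mod_cast h1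
  have r1 := B.rho_pos hM i
  have r2 := B.rho_pos hM j
  have r3 := B.rho_le_one hM i
  have r4 := B.rho_le_one hM j
  have hr4 : (B.rho i + B.rho j) ^ 2 ≤ 2 ^ 2 := by
    have : B.rho i + B.rho j ≤ 2 := by linarith
    gcongr
  unfold Apx.ckOut at hO
  simp only [List.all_eq_true, List.mem_range, Bool.and_eq_true, decide_eq_true_eq] at hO
  obtain ⟨o1, o2⟩ := hO i hi j hj
  by_cases hn : n.natAbs ≤ A.N0
  · by_cases hm : m.natAbs ≤ A.M0
    · unfold Apx.ckSep at hS
      simp only [List.all_eq_true, List.mem_range, Bool.and_eq_true, Bool.or_eq_true,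
        beq_iff_eq] at hS
      rcases hS i hi j hj m (mem_rng hm) n (mem_rng hn) with (hh | hh) | hh
      · exact Or.inl ⟨hh.1.1, hh.1.2, hh.2⟩
      · right
        unfold Apx.far at hh
        rw [decide_eq_true_eq] at hh
        have a1 := abs_lower hN (B.err_x hi hj hm hn)
        have a2 := abs_lower hN (B.err_y (m := m) hi hj hn)
        have a3 := B.rho_le h1 i
        have a4 := B.rho_le h1 j
        set p := max (((A.wx i j m n).natAbs : ℤ) - A.eps) 0 with hp
        set q := max (((A.wy i j m n).natAbs : ℤ) - A.eps) 0 with hq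
        have hp0 : (0 : ℝ) ≤ p := by exact_mod_cast le_max_right _ _
        have hq0 : (0 : ℝ) ≤ q := by exact_mod_cast le_max_right _ _
        have hh' : ((A.rho i : ℝ) + A.rho j + 2) ^ 2 ≤ (p : ℝ) ^ 2 + (q : ℝ) ^ 2 := by
          exact_mod_cast hh
        have b1 : (p : ℝ) ^ 2 ≤ (A.N * |B.wx i j m n|) ^ 2 := by gcongr
        have b2 : (q : ℝ) ^ 2 ≤ (A.N * |B.wy i j n|) ^ 2 := by gcongr
        have b3 : (A.N * (B.rho i + B.rho j)) ^ 2 ≤ ((A.rho i : ℝ) + A.rho j + 2) ^ 2 := by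
          have : A.N * (B.rho i + B.rho j) ≤ (A.rho i : ℝ) + A.rho j + 2 := by linarith
          gcongr
        rw [mul_pow, sq_abs] at b1 b2
        rw [mul_pow] at b3
        have : (A.N : ℝ) ^ 2 * (B.rho i + B.rho j) ^ 2 ≤
            (A.N : ℝ) ^ 2 * (B.wx i j m n ^ 2 + B.wy i j n ^ 2) := by linarith
        exact le_of_mul_le_mul_left this (by positivity)
      · exact Or.inr (B.tangent_of_tE hh).ge
    · right
      have o3 := o2 n (mem_rng hn)
      have : 2 ≤ |(B.X j - B.X i + n * B.v) + m * B.u| := by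
        refine abs_far hN h4 B.hu (a := A.X.getD j 0 - A.X.getD i 0 + n * A.V)
          (c := 2 + A.N0) (M0 := A.M0) ?_ (by omega) ?_
        · have e1 := abs_le.1 (B.hX i hi)
          have e2 := abs_le.1 (B.hX j hj)
          have e4 : |(n : ℝ) * (A.N * B.v - A.V)| ≤ A.N0 := by
            rw [abs_mul]
            have : |(n : ℝ)| ≤ A.N0 := by
              rw [← Int.cast_abs, Int.abs_eq_natAbs]; exact_mod_cast hn
            exact (mul_le_mul this B.hv (abs_nonneg _) (by positivity)).trans (by simp)
          rw [abs_le] at e4 ⊢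
          push_cast
          constructor <;> linarith
        · have o4 : (2 * A.N + (2 + A.N0) +
              ((A.X.getD j 0 - A.X.getD i 0 + n * A.V).natAbs : ℤ) : ℤ) ≤
            (A.M0 + 1) * (A.U - 1) := by linarith
          exact_mod_cast o4
      have e : (B.X j - B.X i + n * B.v) + m * B.u = B.wx i j m n := by unfold wx; ring
      rw [e] at this
      have t2 : (2 : ℝ) ^ 2 ≤ B.wx i j m n ^ 2 := by
        rw [← sq_abs (B.wx i j m n)]; gcongr
      nlinarith [sq_nonneg (B.wy i j n)]
  · right
    have : 2 ≤ |(B.Y j - B.Y i) + n * B.w| := by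
      refine abs_far hN h5 B.hw (a := A.Y.getD j 0 - A.Y.getD i 0)
        (c := 2) (M0 := A.N0) ?_ (by omega) ?_
      · have e1 := abs_le.1 (B.hY i hi)
        have e2 := abs_le.1 (B.hY j hj)
        rw [abs_le]
        push_cast
        constructor <;> linarith
      · exact_mod_cast o1
    have e : (B.Y j - B.Y i) + n * B.w = B.wy i j n := by unfold wy; ring
    rw [e] at this
    have t2 : (2 : ℝ) ^ 2 ≤ B.wy i j n ^ 2 := by
      rw [← sq_abs (B.wy i j n)]; gcongr
    nlinarith [sq_nonneg (B.wx i j m n)]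

lemma mem_nbr (hM : A.ckMisc = true) {i : ℕ} {p : ℕ × ℤ × ℤ} (hp : p ∈ A.nbr i) :
    p.1 < A.k ∧ p.2.1.natAbs ≤ A.M0 ∧ p.2.2.natAbs ≤ A.N0 ∧ A.tE i p.1 p.2.1 p.2.2 = true := by
  obtain ⟨-, -, -, -, -, hE, -⟩ := ck_misc hM
  unfold Apx.nbr at hp
  unfold Apx.tE
  rw [List.any_eq_true]
  rw [List.mem_append, List.mem_map, List.mem_map] at hp
  rcases hp with ⟨e, he, rfl⟩ | ⟨e, he, rfl⟩
  · rw [List.mem_filter, beq_iff_eq] at he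
    obtain ⟨a, b, c, d⟩ := hE e he.1
    exact ⟨d, a, b, e, he.1, by simp [he.2]⟩
  · rw [List.mem_filter, beq_iff_eq] at he
    obtain ⟨a, b, c, d⟩ := hE e he.1
    exact ⟨c, by simpa using a, by simpa using b, e, he.1, by simp [he.2]⟩

lemma crs_pos {N a b c d : ℝ} {a' b' c' d' e : ℤ} (hN : 0 < N) (ha : |N * a - a'| ≤ e)
    (hb : |N * b - b'| ≤ e) (hc : |N * c - c'| ≤ e) (hd : |N * d - d'| ≤ e)
    (h : e * ((a'.natAbs : ℤ) + b'.natAbs + c'.natAbs + d'.natAbs) + 2 * e ^ 2 <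
      a' * d' - b' * c') : 0 < a * d - b * c := by
  have h' : (e : ℝ) * (|(a' : ℝ)| + |(b' : ℝ)| + |(c' : ℝ)| + |(d' : ℝ)|) + 2 * (e : ℝ) ^ 2 <
      a' * d' - b' * c' := by
    simp only [← Int.abs_eq_natAbs] at h
    exact_mod_cast h
  obtain ⟨x, hx⟩ : ∃ x, x = N * a - a' := ⟨_, rfl⟩
  obtain ⟨y, hy⟩ : ∃ x, x = N * b - b' := ⟨_, rfl⟩
  obtain ⟨z, hz⟩ : ∃ x, x = N * c - c' := ⟨_, rfl⟩
  obtain ⟨w, hw⟩ : ∃ x, x = N * d - d' := ⟨_, rfl⟩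
  rw [← hx] at ha
  rw [← hy] at hb
  rw [← hz] at hc
  rw [← hw] at hd
  have bd : ∀ s t E : ℝ, |s| ≤ E → |s * t| ≤ E * |t| := fun s t E hs => by
    rw [abs_mul]; exact mul_le_mul_of_nonneg_right hs (abs_nonneg _)
  have k1 := (abs_le.1 (bd x d' e ha)).1
  have k2 := (abs_le.1 (bd w a' e hd)).1
  have k3 := (abs_le.1 (bd y c' e hb)).2
  have k4 := (abs_le.1 (bd z b' e hc)).2
  have e0 : (0 : ℝ) ≤ e := (abs_nonneg _).trans ha
  have k5 : |x * w| ≤ (e : ℝ) ^ 2 := by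
    rw [abs_mul, pow_two]; exact mul_le_mul ha hd (abs_nonneg _) e0
  have k6 : |y * z| ≤ (e : ℝ) ^ 2 := by
    rw [abs_mul, pow_two]; exact mul_le_mul hb hc (abs_nonneg _) e0
  have k5' := (abs_le.1 k5).1
  have k6' := (abs_le.1 k6).2
  have key : N ^ 2 * (a * d - b * c) = (a' * d' - b' * c') + x * d' + w * a' - y * c' - z * b'
      + x * w - y * z := by
    rw [hx, hy, hz, hw]; ring
  have : 0 < N ^ 2 * (a * d - b * c) := by rw [key]; linarith
  exact (pos_iff_pos_of_mul_pos this).1 (by positivity)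


/-- the disks of the packing -/
def disk (hM : A.ckMisc = true) (i : ℕ) (m n : ℤ) : Disk := ⟨B.pos i m n, B.rho i, B.rho_pos hM i⟩

def pack (hM : A.ckMisc = true) : Set Disk := {d | ∃ i < A.k, ∃ m n : ℤ, d = B.disk hM i m n}

lemma dist_disk (hM : A.ckMisc = true) (i j : ℕ) (m n m' n' : ℤ) :
    dist (B.disk hM i m n).center (B.disk hM j m' n').center ^ 2 =
      B.wx i j (m' - m) (n' - n) ^ 2 + B.wy i j (n' - n) ^ 2 := by
  rw [dist_sq]
  unfold disk pos wx wy
  simp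
  ring

lemma tangent_disk (hM : A.ckMisc = true) {i j : ℕ} {m n m' n' : ℤ}
    (h : A.tE i j (m' - m) (n' - n) = true) :
    (B.disk hM i m n).Tangent (B.disk hM j m' n') := by
  have h1 := B.rho_pos hM i
  have h2 := B.rho_pos hM j
  unfold Disk.Tangent
  rw [← sq_eq_sq₀ dist_nonneg (by unfold disk; positivity), dist_disk, B.tangent_of_tE h]
  rfl

lemma SA_disk (hM : A.ckMisc = true) (i j : ℕ) (m n m' n' : ℤ) (x : Plane) :
    SA (B.disk hM i m n).center (B.disk hM j m' n').center x =
      B.wx i j (m' - m) (n' - n) * (x 1 - B.pos i m n 1) -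
        B.wy i j (n' - n) * (x 0 - B.pos i m n 0) := by
  unfold disk wx wy SA pos
  simp
  ring

lemma SA_disk' (hM : A.ckMisc = true) (i j : ℕ) (m n m' n' : ℤ) (x : Plane) :
    SA (B.disk hM j m' n').center (B.disk hM i m n).center x =
      (x 0 - B.pos i m n 0) * B.wy i j (n' - n) -
      (x 1 - B.pos i m n 1) * B.wx i j (m' - m) (n' - n) := by
  unfold disk wx wy SA pos
  simp
  ring

theorem compact (h : A.ck = true) : ∃ P : Set Disk, IsCompactPacking P ∧ RadiiIn P {1, B.r} ∧
    UsesRadius P 1 ∧ UsesRadius P B.r := by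
  have hck := h
  unfold Apx.ck at h
  simp only [Bool.and_eq_true] at h
  obtain ⟨⟨⟨hM, -⟩, hC⟩, -⟩ := h
  obtain ⟨h1, h2, h3, h4, h5, hE, ⟨i1, hi1, hs1⟩, ⟨i2, hi2, hs2⟩, hL⟩ := ck_misc hM
  have hN : (0 : ℝ) < A.N := by exact_mod_cast h1
  have hr := B.r_pos hM
  have hr1 := B.r_lt hM
  refine ⟨B.pack hM, ?_, ?_, ⟨B.disk hM i2 0 0, ⟨i2, hi2, 0, 0, rfl⟩, ?_⟩,
    ⟨B.disk hM i1 0 0, ⟨i1, hi1, 0, 0, rfl⟩, ?_⟩⟩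
  rotate_left
  · rintro _ ⟨i, hi, m, n, rfl⟩
    show B.rho i ∈ _
    unfold rho
    split_ifs <;> simp
  · show B.rho i2 = 1
    unfold rho; rw [hs2]; simp
  · show B.rho i1 = B.r
    unfold rho; rw [hs1]; simp
  refine compact_of_cones hr ?_ ?_ ⟨_, i1, hi1, 0, 0, rfl⟩ ?_
  · rintro _ ⟨i, hi, m, n, rfl⟩ _ ⟨j, hj, m', n', rfl⟩ hne
    rcases B.sep hck (m' - m) (n' - n) hi hj with ⟨e1, e2, e3⟩ | hle
    · refine absurd ?_ hne
      subst e1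
      rw [show m' = m by omega, show n' = n by omega]
    · rw [← dist_disk B hM] at hle
      exact le_of_sq_le_sq hle dist_nonneg
  · rintro _ ⟨i, hi, m, n, rfl⟩
    show B.r ≤ B.rho i ∧ B.rho i ≤ 1
    unfold rho
    split_ifs <;> constructor <;> linarith
  · rintro _ ⟨i, hi, m, n, rfl⟩ x
    unfold Apx.ckCone at hC
    simp only [List.all_eq_true, List.mem_range, Bool.and_eq_true, List.any_eq_true] at hC
    obtain ⟨hne, hsuc⟩ := hC i hi
    have hne' : (A.nbr i).toFinset.Nonempty := by
      obtain ⟨p, hp⟩ := List.exists_mem_of_ne_nil (A.nbr i) (by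
        intro h; rw [h] at hne; simp at hne)
      exact ⟨p, List.mem_toFinset.2 hp⟩
    obtain ⟨p, hp, q, hq, ⟨hpos, hS⟩, hx1, hx2⟩ := cone_cover (A.nbr i).toFinset hne'
      (fun p => B.wx i p.1 p.2.1 p.2.2) (fun p => B.wy i p.1 p.2.2)
      (fun p q => A.suc i p q = true) (by
        intro p hp
        rw [List.mem_toFinset] at hp
        obtain ⟨q, hq, hs⟩ := hsuc p hp
        refine ⟨q, List.mem_toFinset.2 hq, ?_, hs⟩
        obtain ⟨p1, p2, p3, -⟩ := mem_nbr hM hp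
        obtain ⟨q1, q2, q3, -⟩ := mem_nbr hM hq
        unfold Apx.suc Apx.crs at hs
        simp only [Bool.and_eq_true, decide_eq_true_eq] at hs
        exact crs_pos hN (B.err_x hi p1 p2 p3) (B.err_y hi p1 p3) (B.err_x hi q1 q2 q3)
          (B.err_y hi q1 q3) hs.1.1) (x 0 - B.pos i m n 0) (x 1 - B.pos i m n 1)
    rw [List.mem_toFinset] at hp hq
    obtain ⟨p1, p2, p3, pt⟩ := mem_nbr hM hp
    obtain ⟨q1, q2, q3, qt⟩ := mem_nbr hM hq
    unfold Apx.suc at hS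
    simp only [Bool.and_eq_true, Bool.or_eq_true] at hS
    refine ⟨B.disk hM p.1 (m + p.2.1) (n + p.2.2), B.disk hM q.1 (m + q.2.1) (n + q.2.2),
      ⟨⟨i, hi, _, _, rfl⟩, ⟨_, p1, _, _, rfl⟩, ⟨_, q1, _, _, rfl⟩, ?_, ?_, ?_, ?_, ?_⟩, ?_, ?_⟩
    · apply B.tangent_disk hM; simpa using pt
    · apply B.tangent_disk hM
      simpa using hS.1.2
    · apply Disk.Tangent.symm
      apply B.tangent_disk hM; simpa using qt
    · rw [SA_disk]
      have e0 : (B.disk hM q.1 (m + q.2.1) (n + q.2.2)).center 0 - B.pos i m n 0 =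
          B.wx i q.1 q.2.1 q.2.2 := by
        unfold disk pos wx; simp; ring
      have e1 : (B.disk hM q.1 (m + q.2.1) (n + q.2.2)).center 1 - B.pos i m n 1 =
          B.wy i q.1 q.2.2 := by
        unfold disk pos wy; simp; ring
      rw [e0, e1]
      simpa using hpos
    · show B.rho i = B.r ∨ B.rho p.1 = B.r ∨ B.rho q.1 = B.r ∨ _
      unfold rho
      rcases hS.2 with ((k | k) | k) | k
      · left; rw [k]; simp
      · right; left; rw [k]; simp
      · right; right; left; rw [k]; simp
      · right; right; right
        have l1 : (4 : ℝ) * A.N ^ 2 < 3 * (A.N + A.R - 1) ^ 2 := by exact_mod_cast hL k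
        have l2 := (abs_le.1 B.hr).1
        have l3 : (1 : ℝ) < A.R := by exact_mod_cast h2
        have l4 : ((A.N : ℝ) + A.R - 1) ^ 2 ≤ (A.N * (1 + B.r)) ^ 2 := by
          have : (A.N : ℝ) + A.R - 1 ≤ A.N * (1 + B.r) := by linarith
          have : (0 : ℝ) ≤ A.N + A.R - 1 := by linarith
          gcongr
        rw [mul_pow] at l4
        have : (A.N : ℝ) ^ 2 * 4 < (A.N : ℝ) ^ 2 * (3 * (1 + B.r) ^ 2) := by linarith
        exact lt_of_mul_lt_mul_left this (by positivity)
    · rw [SA_disk]; simpa using hx1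
    · rw [SA_disk']; simpa using hx2

theorem mem_ratio (h : A.ck = true) : B.r ∈ RatioSet := by
  have hM : A.ckMisc = true := by
    unfold Apx.ck at h
    simp only [Bool.and_eq_true] at h
    exact h.1.1.1
  exact ⟨B.r_pos hM, B.r_lt hM, B.compact h⟩

end Real9

end

noncomputable section

/-- data of packing number 1 -/
def ap1 : Apx where
  k := 4
  N := 10000
  X := [6376, -6376, 0, 0]
  Y := [0, 0, 15083, -15083]
  S := [true, true, false, false]
  U := 38686
  V := 19343
  W := 25083
  R := 6376
  M0 := 1
  N0 := 2
  E := [(0, 1, 0, 0), (0, 2, 0, 0), (0, 2, 1, -1), (0, 3, 0, 0), (0, 3, 0, 1), (1, 2, 0, -1),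
    (1, 2, 0, 0), (1, 3, -1, 1), (1, 3, 0, 0), (2, 3, -1, 1), (2, 3, -1, 2), (2, 3, 0, 1)]
  L := true

lemma ck1 : ap1.ck = true := by decide +kernel

/-- data of packing number 2 -/
def ap2 : Apx where
  k := 6
  N := 10000
  X := [6295, -3147, -3147, 21746, -10873, -10873]
  Y := [0, 5452, -5452, 0, 18833, -18833]
  S := [true, true, true, false, false, false]
  U := 39352
  V := 19676
  W := 34080
  R := 5452
  M0 := 1
  N0 := 1
  E := [(0, 1, 0, 0), (0, 2, 0, 0), (0, 3, 0, 0), (0, 4, 1, -1), (0, 5, 0, 1), (1, 2, 0, 0),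
    (1, 3, -1, 0), (1, 4, 0, 0), (1, 5, 0, 1), (2, 3, -1, 0), (2, 4, 1, -1), (2, 5, 0, 0),
    (3, 4, 1, -1), (3, 4, 1, 0), (3, 5, 0, 1), (3, 5, 1, 0), (4, 5, -1, 1), (4, 5, 0, 1)]
  L := true

lemma ck2 : ap2.ck = true := by decide +kernel

/-- data of packing number 3 -/
def ap3 : Apx where
  k := 3
  N := 10000
  X := [0, 10000, 0]
  Y := [0, 11623, 15333]
  S := [false, true, true]
  U := 20000
  V := 10000
  W := 26956
  R := 5333
  M0 := 2
  N0 := 1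
  E := [(0, 0, -1, 0), (0, 1, -1, 0), (0, 1, 0, -1), (0, 1, 0, 0), (0, 2, 0, -1), (0, 2, 0, 0),
    (0, 2, 1, -1), (1, 2, 0, 0), (1, 2, 1, 0)]
  L := true

lemma ck3 : ap3.ck = true := by decide +kernel

/-- data of packing number 4 -/
def ap4 : Apx where
  k := 2
  N := 10000
  X := [0, 10000]
  Y := [0, 10000]
  S := [false, true]
  U := 20000
  V := 0
  W := 20000
  R := 4142
  M0 := 1
  N0 := 1
  E := [(0, 0, -1, 0), (0, 0, 0, -1), (0, 1, -1, -1), (0, 1, -1, 0), (0, 1, 0, -1), (0, 1, 0, 0)]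
  L := true

lemma ck4 : ap4.ck = true := by decide +kernel

/-- data of packing number 5 -/
def ap5 : Apx where
  k := 9
  N := 10000
  X := [0, 7722, 3861, -3861, -7722, -3861, 3861, 0, 0]
  Y := [0, 0, 6688, 6688, 0, -6688, -6688, 20000, -20000]
  S := [true, true, true, true, true, true, true, false, false]
  U := 34641
  V := 17321
  W := 30000
  R := 3861
  M0 := 2
  N0 := 2
  E := [(0, 1, 0, 0), (0, 2, 0, 0), (0, 3, 0, 0), (0, 4, 0, 0), (0, 5, 0, 0), (0, 6, 0, 0),
    (1, 2, 0, 0), (1, 6, 0, 0), (1, 7, 1, -1), (1, 8, 0, 1), (2, 3, 0, 0), (2, 7, 0, 0),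
    (2, 8, 0, 1), (3, 4, 0, 0), (3, 7, 0, 0), (3, 8, -1, 1), (4, 5, 0, 0), (4, 7, 0, -1),
    (4, 8, -1, 1), (5, 6, 0, 0), (5, 7, 0, -1), (5, 8, 0, 0), (6, 7, 1, -1), (6, 8, 0, 0),
    (7, 8, -1, 1), (7, 8, -1, 2), (7, 8, 0, 1)]
  L := true

lemma ck5 : ap5.ck = true := by decide +kernel

/-- data of packing number 6 -/
def ap6 : Apx where
  k := 7
  N := 10000
  X := [0, 13032, 13032, 9540, 3492, 9540, 3492]
  Y := [0, 3492, -3492, 9540, 13032, -9540, -13032]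
  S := [false, true, true, true, true, true, true]
  U := 26065
  V := 13032
  W := 22573
  R := 3492
  M0 := 2
  N0 := 2
  E := [(0, 1, -1, 0), (0, 1, 0, 0), (0, 2, -1, 0), (0, 2, 0, 0), (0, 3, 0, -1), (0, 3, 0, 0),
    (0, 4, 0, -1), (0, 4, 0, 0), (0, 5, -1, 1), (0, 5, 0, 0), (0, 6, -1, 1), (0, 6, 0, 0),
    (1, 2, 0, 0), (1, 3, 0, 0), (1, 6, 0, 1), (2, 4, 1, -1), (2, 5, 0, 0), (3, 4, 0, 0),
    (3, 6, 0, 1), (4, 5, -1, 1), (5, 6, 0, 0)]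
  L := true

lemma ck6 : ap6.ck = true := by decide +kernel

/-- data of packing number 7 -/
def ap7 : Apx where
  k := 3
  N := 10000
  X := [0, 0, 0]
  Y := [0, 12808, 18423]
  S := [false, true, true]
  U := 24992
  V := 12496
  W := 15616
  R := 2808
  M0 := 1
  N0 := 2
  E := [(0, 0, -1, 1), (0, 0, 0, -1), (0, 1, 0, -1), (0, 1, 0, 0), (0, 1, 1, -1), (0, 2, 0, -1),
    (0, 2, 1, -2), (0, 2, 1, -1), (1, 2, 0, 0)]
  L := true

lemma ck7 : ap7.ck = true := by decide +kernel

/-- data of packing number 8 -/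
def ap8 : Apx where
  k := 3
  N := 10000
  X := [0, 10000, 20000]
  Y := [0, 5774, 11547]
  S := [false, true, true]
  U := 20000
  V := 10000
  W := 17321
  R := 1547
  M0 := 2
  N0 := 1
  E := [(0, 0, -1, 0), (0, 0, -1, 1), (0, 0, 0, -1), (0, 1, -1, 0), (0, 1, 0, -1), (0, 1, 0, 0),
    (0, 2, -1, -1), (0, 2, -1, 0), (0, 2, 0, -1)]
  L := false

lemma ck8 : ap8.ck = true := by decide +kernel

/-- data of packing number 9 -/
def ap9 : Apx where
  k := 7
  N := 10000
  X := [0, 10000, 11010, 8990, 20000, 21010, 18990]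
  Y := [0, 4607, 6357, 6357, 12713, 10964, 10964]
  S := [false, true, true, true, true, true, true]
  U := 20000
  V := 10000
  W := 17321
  R := 1010
  M0 := 2
  N0 := 1
  E := [(0, 0, -1, 0), (0, 0, -1, 1), (0, 0, 0, -1), (0, 1, -1, 0), (0, 1, 0, 0), (0, 2, -1, 0),
    (0, 2, 0, -1), (0, 3, 0, -1), (0, 3, 0, 0), (0, 4, -1, -1), (0, 4, 0, -1), (0, 5, -1, -1),
    (0, 5, -1, 0), (0, 6, -1, 0), (0, 6, 0, -1), (1, 2, 0, 0), (1, 3, 0, 0), (2, 3, 0, 0),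
    (4, 5, 0, 0), (4, 6, 0, 0), (5, 6, 0, 0)]
  L := false

lemma ck9 : ap9.ck = true := by decide +kernel

end

noncomputable section

lemma real1 {r t w : ℝ} (ht : t ^ 2 = 1 + 2 * r) (hw : w ^ 2 = r ^ 2 + 2 * r) (h : r ^ 2 + 2 * r - 1 + r * w = t)
    (br1 : (637555 / 1000000 : ℝ) ≤ r) (br2 : r ≤ (637556 / 1000000 : ℝ)) (bt1 : (1508347 / 1000000 : ℝ) ≤ t) (bt2 : t ≤ (1508348 / 1000000 : ℝ)) (bw1 : (1296761 / 1000000 : ℝ) ≤ w) (bw2 : w ≤ (1296762 / 1000000 : ℝ)) :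
    r ∈ RatioSet := by
  refine Real9.mem_ratio (A := ap1) ⟨fun i => [r, -r, 0, 0].getD i 0,
    fun i => [0, 0, t, -t].getD i 0,
    2 * (r + w), r + w, t + 1, r, ?_, ?_, ?_, ?_, ?_, ?_, ?_⟩ ck1
  · intro i hi
    simp only [ap1] at hi ⊢
    interval_cases i <;> simp <;> rw [abs_le] <;> constructor <;> linarith
  · intro i hi
    simp only [ap1] at hi ⊢
    interval_cases i <;> simp <;> rw [abs_le] <;> constructor <;> linarith
  · simp only [ap1]; push_cast; rw [abs_le]; constructor <;> linarith
  · simp only [ap1]; push_cast; rw [abs_le]; constructor <;> linarith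
  · simp only [ap1]; push_cast; rw [abs_le]; constructor <;> linarith
  · simp only [ap1]; push_cast; rw [abs_le]; constructor <;> linarith
  · clear * - ht hw h
    simp only [ap1, List.forall_mem_cons]
    refine ⟨?_, ?_, ?_, ?_, ?_, ?_, ?_, ?_, ?_, ?_, ?_, ?_, ?_⟩
    on_goal 13 => exact fun e he => absurd he List.not_mem_nil
    all_goals
      simp only [Apx.sm, List.getD_cons_zero, List.getD_cons_succ, Bool.false_eq_true, if_true, if_false]
      push_cast
      grind

lemma real2 {r s t : ℝ} (hs : s ^ 2 = 3) (ht : t ^ 2 = 1 + 2 * r) (h : (r * s / 3 + t) ^ 2 + (2 * r * s / 3 + 1 + r) ^ 2 - (r * s / 3 + t) * (2 * r * s / 3 + 1 + r) = 4)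
    (br1 : (545151 / 1000000 : ℝ) ≤ r) (br2 : r ≤ (545152 / 1000000 : ℝ)) (bs1 : (1732050 / 1000000 : ℝ) ≤ s) (bs2 : s ≤ (1732051 / 1000000 : ℝ)) (bt1 : (1445787 / 1000000 : ℝ) ≤ t) (bt2 : t ≤ (1445788 / 1000000 : ℝ)) :
    r ∈ RatioSet := by
  have cr1 := mul_nonneg (sub_nonneg.2 br1) (sub_nonneg.2 bs1)
  have cr2 := mul_nonneg (sub_nonneg.2 br2) (sub_nonneg.2 bs2)
  have cr3 := mul_nonneg (sub_nonneg.2 br1) (sub_nonneg.2 bs2)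
  have cr4 := mul_nonneg (sub_nonneg.2 br2) (sub_nonneg.2 bs1)
  have ct1 := mul_nonneg (sub_nonneg.2 bt1) (sub_nonneg.2 bs1)
  have ct2 := mul_nonneg (sub_nonneg.2 bt2) (sub_nonneg.2 bs2)
  have ct3 := mul_nonneg (sub_nonneg.2 bt1) (sub_nonneg.2 bs2)
  have ct4 := mul_nonneg (sub_nonneg.2 bt2) (sub_nonneg.2 bs1)
  refine Real9.mem_ratio (A := ap2) ⟨fun i => [2 * r * s / 3, -(r * s / 3), -(r * s / 3), 2 * r * s / 3 + 1 + r, -(r * s / 3) - 1 / 2 - r / 2, -(r * s / 3) - 1 / 2 - r / 2].getD i 0,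
    fun i => [0, r, -r, 0, r + s / 2 + r * s / 2, -r - s / 2 - r * s / 2].getD i 0,
    r * s + t + 1 + r, (r * s + t + 1 + r) / 2, (3 * r + t * s + s + r * s) / 2, r, ?_, ?_, ?_, ?_, ?_, ?_, ?_⟩ ck2
  · intro i hi
    simp only [ap2] at hi ⊢
    interval_cases i <;> simp <;> rw [abs_le] <;> constructor <;> linarith
  · intro i hi
    simp only [ap2] at hi ⊢
    interval_cases i <;> simp <;> rw [abs_le] <;> constructor <;> linarith
  · simp only [ap2]; push_cast; rw [abs_le]; constructor <;> linarith
  · simp only [ap2]; push_cast; rw [abs_le]; constructor <;> linarith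
  · simp only [ap2]; push_cast; rw [abs_le]; constructor <;> linarith
  · simp only [ap2]; push_cast; rw [abs_le]; constructor <;> linarith
  · clear * - hs ht h
    simp only [ap2, List.forall_mem_cons]
    refine ⟨?_, ?_, ?_, ?_, ?_, ?_, ?_, ?_, ?_, ?_, ?_, ?_, ?_, ?_, ?_, ?_, ?_, ?_, ?_⟩
    on_goal 19 => exact fun e he => absurd he List.not_mem_nil
    all_goals
      simp only [Apx.sm, List.getD_cons_zero, List.getD_cons_succ, Bool.false_eq_true, if_true, if_false]
      push_cast
      grind

lemma real3 {r h' : ℝ} (h : 8 * r ^ 3 + 3 * r ^ 2 - 2 * r - 1 = 0) (hh : h' * (1 + r) = 1 + 2 * r - r ^ 2) (h2 : h' ^ 2 = r ^ 2 + 2 * r)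
    (br1 : (533296 / 1000000 : ℝ) ≤ r) (br2 : r ≤ (533297 / 1000000 : ℝ)) (bh1 : (1162324 / 1000000 : ℝ) ≤ h') (bh2 : h' ≤ (1162325 / 1000000 : ℝ)) :
    r ∈ RatioSet := by
  refine Real9.mem_ratio (A := ap3) ⟨fun i => [0, 1, 0].getD i 0,
    fun i => [0, h', 1 + r].getD i 0,
    2, 1, h' + 1 + r, r, ?_, ?_, ?_, ?_, ?_, ?_, ?_⟩ ck3
  · intro i hi
    simp only [ap3] at hi ⊢
    interval_cases i <;> simp <;> rw [abs_le] <;> constructor <;> linarith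
  · intro i hi
    simp only [ap3] at hi ⊢
    interval_cases i <;> simp <;> rw [abs_le] <;> constructor <;> linarith
  · simp only [ap3]; push_cast; rw [abs_le]; constructor <;> linarith
  · simp only [ap3]; push_cast; rw [abs_le]; constructor <;> linarith
  · simp only [ap3]; push_cast; rw [abs_le]; constructor <;> linarith
  · simp only [ap3]; push_cast; rw [abs_le]; constructor <;> linarith
  · clear * - h hh h2
    simp only [ap3, List.forall_mem_cons]
    refine ⟨?_, ?_, ?_, ?_, ?_, ?_, ?_, ?_, ?_, ?_⟩
    on_goal 10 => exact fun e he => absurd he List.not_mem_nil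
    all_goals
      simp only [Apx.sm, List.getD_cons_zero, List.getD_cons_succ, Bool.false_eq_true, if_true, if_false]
      push_cast
      grind

lemma real4 {r : ℝ} (h : (r + 1) ^ 2 = 2)
    (br1 : (414213 / 1000000 : ℝ) ≤ r) (br2 : r ≤ (414214 / 1000000 : ℝ)) :
    r ∈ RatioSet := by
  refine Real9.mem_ratio (A := ap4) ⟨fun i => [0, 1].getD i 0,
    fun i => [0, 1].getD i 0,
    2, 0, 2, r, ?_, ?_, ?_, ?_, ?_, ?_, ?_⟩ ck4
  · intro i hi
    simp only [ap4] at hi ⊢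
    interval_cases i <;> simp <;> rw [abs_le] <;> constructor <;> linarith
  · intro i hi
    simp only [ap4] at hi ⊢
    interval_cases i <;> simp <;> rw [abs_le] <;> constructor <;> linarith
  · simp only [ap4]; push_cast; rw [abs_le]; constructor <;> linarith
  · simp only [ap4]; push_cast; rw [abs_le]; constructor <;> linarith
  · simp only [ap4]; push_cast; rw [abs_le]; constructor <;> linarith
  · simp only [ap4]; push_cast; rw [abs_le]; constructor <;> linarith
  · clear * - h
    simp only [ap4, List.forall_mem_cons]
    refine ⟨?_, ?_, ?_, ?_, ?_, ?_, ?_⟩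
    on_goal 7 => exact fun e he => absurd he List.not_mem_nil
    all_goals
      simp only [Apx.sm, List.getD_cons_zero, List.getD_cons_succ, Bool.false_eq_true, if_true, if_false]
      push_cast
      grind

lemma real5 {r s : ℝ} (hs : s ^ 2 = 3) (h : 3 * r ^ 2 - (4 * s + 2) * r + 3 = 0)
    (br1 : (386106 / 1000000 : ℝ) ≤ r) (br2 : r ≤ (386107 / 1000000 : ℝ)) (bs1 : (1732050 / 1000000 : ℝ) ≤ s) (bs2 : s ≤ (1732051 / 1000000 : ℝ)) :
    r ∈ RatioSet := by
  have cr1 := mul_nonneg (sub_nonneg.2 br1) (sub_nonneg.2 bs1)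
  have cr2 := mul_nonneg (sub_nonneg.2 br2) (sub_nonneg.2 bs2)
  have cr3 := mul_nonneg (sub_nonneg.2 br1) (sub_nonneg.2 bs2)
  have cr4 := mul_nonneg (sub_nonneg.2 br2) (sub_nonneg.2 bs1)
  refine Real9.mem_ratio (A := ap5) ⟨fun i => [0, 2 * r, r, -r, -2 * r, -r, r, 0, 0].getD i 0,
    fun i => [0, 0, r * s, r * s, 0, -(r * s), -(r * s), 2, -2].getD i 0,
    2 * s, s, 3, r, ?_, ?_, ?_, ?_, ?_, ?_, ?_⟩ ck5
  · intro i hi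
    simp only [ap5] at hi ⊢
    interval_cases i <;> simp <;> rw [abs_le] <;> constructor <;> linarith
  · intro i hi
    simp only [ap5] at hi ⊢
    interval_cases i <;> simp <;> rw [abs_le] <;> constructor <;> linarith
  · simp only [ap5]; push_cast; rw [abs_le]; constructor <;> linarith
  · simp only [ap5]; push_cast; rw [abs_le]; constructor <;> linarith
  · simp only [ap5]; push_cast; rw [abs_le]; constructor <;> linarith
  · simp only [ap5]; push_cast; rw [abs_le]; constructor <;> linarith
  · clear * - hs h
    simp only [ap5, List.forall_mem_cons]
    refine ⟨?_, ?_, ?_, ?_, ?_, ?_, ?_, ?_, ?_, ?_, ?_, ?_, ?_, ?_, ?_, ?_, ?_, ?_, ?_, ?_, ?_, ?_, ?_, ?_, ?_, ?_, ?_, ?_⟩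
    on_goal 28 => exact fun e he => absurd he List.not_mem_nil
    all_goals
      simp only [Apx.sm, List.getD_cons_zero, List.getD_cons_succ, Bool.false_eq_true, if_true, if_false]
      push_cast
      grind

lemma real6 {r s : ℝ} (hs : s ^ 2 = 3) (h : r ^ 2 * (7 + 4 * s) - 1 - 2 * r = 0)
    (br1 : (349198 / 1000000 : ℝ) ≤ r) (br2 : r ≤ (349199 / 1000000 : ℝ)) (bs1 : (1732050 / 1000000 : ℝ) ≤ s) (bs2 : s ≤ (1732051 / 1000000 : ℝ)) :
    r ∈ RatioSet := by
  have cr1 := mul_nonneg (sub_nonneg.2 br1) (sub_nonneg.2 bs1)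
  have cr2 := mul_nonneg (sub_nonneg.2 br2) (sub_nonneg.2 bs2)
  have cr3 := mul_nonneg (sub_nonneg.2 br1) (sub_nonneg.2 bs2)
  have cr4 := mul_nonneg (sub_nonneg.2 br2) (sub_nonneg.2 bs1)
  refine Real9.mem_ratio (A := ap6) ⟨fun i => [0, 2 * r + r * s, 2 * r + r * s, r + r * s, r, r + r * s, r].getD i 0,
    fun i => [0, r, -r, r + r * s, 2 * r + r * s, -r - r * s, -2 * r - r * s].getD i 0,
    2 * (2 * r + r * s), 2 * r + r * s, 2 * r * s + 3 * r, r, ?_, ?_, ?_, ?_, ?_, ?_, ?_⟩ ck6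
  · intro i hi
    simp only [ap6] at hi ⊢
    interval_cases i <;> simp <;> rw [abs_le] <;> constructor <;> linarith
  · intro i hi
    simp only [ap6] at hi ⊢
    interval_cases i <;> simp <;> rw [abs_le] <;> constructor <;> linarith
  · simp only [ap6]; push_cast; rw [abs_le]; constructor <;> linarith
  · simp only [ap6]; push_cast; rw [abs_le]; constructor <;> linarith
  · simp only [ap6]; push_cast; rw [abs_le]; constructor <;> linarith
  · simp only [ap6]; push_cast; rw [abs_le]; constructor <;> linarith
  · clear * - hs h
    simp only [ap6, List.forall_mem_cons]
    refine ⟨?_, ?_, ?_, ?_, ?_, ?_, ?_, ?_, ?_, ?_, ?_, ?_, ?_, ?_, ?_, ?_, ?_, ?_, ?_, ?_, ?_, ?_⟩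
    on_goal 22 => exact fun e he => absurd he List.not_mem_nil
    all_goals
      simp only [Apx.sm, List.getD_cons_zero, List.getD_cons_succ, Bool.false_eq_true, if_true, if_false]
      push_cast
      grind

lemma real7 {r p : ℝ} (h : 2 * r ^ 2 + 3 * r - 1 = 0) (hp : p ^ 2 = 1 + 2 * r)
    (br1 : (280776 / 1000000 : ℝ) ≤ r) (br2 : r ≤ (280777 / 1000000 : ℝ)) (bp1 : (1249621 / 1000000 : ℝ) ≤ p) (bp2 : p ≤ (1249622 / 1000000 : ℝ)) :
    r ∈ RatioSet := by
  refine Real9.mem_ratio (A := ap7) ⟨fun i => [0, 0, 0].getD i 0,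
    fun i => [0, 1 + r, 2 * (1 + 2 * r) - 1 - r].getD i 0,
    2 * p, p, 1 + 2 * r, r, ?_, ?_, ?_, ?_, ?_, ?_, ?_⟩ ck7
  · intro i hi
    simp only [ap7] at hi ⊢
    interval_cases i <;> simp <;> rw [abs_le] <;> constructor <;> linarith
  · intro i hi
    simp only [ap7] at hi ⊢
    interval_cases i <;> simp <;> rw [abs_le] <;> constructor <;> linarith
  · simp only [ap7]; push_cast; rw [abs_le]; constructor <;> linarith
  · simp only [ap7]; push_cast; rw [abs_le]; constructor <;> linarith
  · simp only [ap7]; push_cast; rw [abs_le]; constructor <;> linarith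
  · simp only [ap7]; push_cast; rw [abs_le]; constructor <;> linarith
  · clear * - h hp
    simp only [ap7, List.forall_mem_cons]
    refine ⟨?_, ?_, ?_, ?_, ?_, ?_, ?_, ?_, ?_, ?_⟩
    on_goal 10 => exact fun e he => absurd he List.not_mem_nil
    all_goals
      simp only [Apx.sm, List.getD_cons_zero, List.getD_cons_succ, Bool.false_eq_true, if_true, if_false]
      push_cast
      grind

lemma real8 {r s : ℝ} (hs : s ^ 2 = 3) (h : r = 2 * s / 3 - 1)
    (br1 : (154700 / 1000000 : ℝ) ≤ r) (br2 : r ≤ (154701 / 1000000 : ℝ)) (bs1 : (1732050 / 1000000 : ℝ) ≤ s) (bs2 : s ≤ (1732051 / 1000000 : ℝ)) :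
    r ∈ RatioSet := by
  refine Real9.mem_ratio (A := ap8) ⟨fun i => [0, 1, 2].getD i 0,
    fun i => [0, s / 3, 2 * s / 3].getD i 0,
    2, 1, s, r, ?_, ?_, ?_, ?_, ?_, ?_, ?_⟩ ck8
  · intro i hi
    simp only [ap8] at hi ⊢
    interval_cases i <;> simp <;> rw [abs_le] <;> constructor <;> linarith
  · intro i hi
    simp only [ap8] at hi ⊢
    interval_cases i <;> simp <;> rw [abs_le] <;> constructor <;> linarith
  · simp only [ap8]; push_cast; rw [abs_le]; constructor <;> linarith
  · simp only [ap8]; push_cast; rw [abs_le]; constructor <;> linarith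
  · simp only [ap8]; push_cast; rw [abs_le]; constructor <;> linarith
  · simp only [ap8]; push_cast; rw [abs_le]; constructor <;> linarith
  · clear * - hs h
    simp only [ap8, List.forall_mem_cons]
    refine ⟨?_, ?_, ?_, ?_, ?_, ?_, ?_, ?_, ?_, ?_⟩
    on_goal 10 => exact fun e he => absurd he List.not_mem_nil
    all_goals
      simp only [Apx.sm, List.getD_cons_zero, List.getD_cons_succ, Bool.false_eq_true, if_true, if_false]
      push_cast
      grind

lemma real9 {r s : ℝ} (hs : s ^ 2 = 3) (h : r ^ 2 - 10 * r + 1 = 0)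
    (br1 : (101020 / 1000000 : ℝ) ≤ r) (br2 : r ≤ (101021 / 1000000 : ℝ)) (bs1 : (1732050 / 1000000 : ℝ) ≤ s) (bs2 : s ≤ (1732051 / 1000000 : ℝ)) :
    r ∈ RatioSet := by
  have cr1 := mul_nonneg (sub_nonneg.2 br1) (sub_nonneg.2 bs1)
  have cr2 := mul_nonneg (sub_nonneg.2 br2) (sub_nonneg.2 bs2)
  have cr3 := mul_nonneg (sub_nonneg.2 br1) (sub_nonneg.2 bs2)
  have cr4 := mul_nonneg (sub_nonneg.2 br2) (sub_nonneg.2 bs1)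
  refine Real9.mem_ratio (A := ap9) ⟨fun i => [0, 1, 1 + r, 1 - r, 2, 2 + r, 2 - r].getD i 0,
    fun i => [0, s / 3 - 2 * r * s / 3, s / 3 + r * s / 3, s / 3 + r * s / 3, 2 * s / 3 + 2 * r * s / 3, 2 * s / 3 - r * s / 3, 2 * s / 3 - r * s / 3].getD i 0,
    2, 1, s, r, ?_, ?_, ?_, ?_, ?_, ?_, ?_⟩ ck9
  · intro i hi
    simp only [ap9] at hi ⊢
    interval_cases i <;> simp <;> rw [abs_le] <;> constructor <;> linarith
  · intro i hi
    simp only [ap9] at hi ⊢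
    interval_cases i <;> simp <;> rw [abs_le] <;> constructor <;> linarith
  · simp only [ap9]; push_cast; rw [abs_le]; constructor <;> linarith
  · simp only [ap9]; push_cast; rw [abs_le]; constructor <;> linarith
  · simp only [ap9]; push_cast; rw [abs_le]; constructor <;> linarith
  · simp only [ap9]; push_cast; rw [abs_le]; constructor <;> linarith
  · clear * - hs h
    simp only [ap9, List.forall_mem_cons]
    refine ⟨?_, ?_, ?_, ?_, ?_, ?_, ?_, ?_, ?_, ?_, ?_, ?_, ?_, ?_, ?_, ?_, ?_, ?_, ?_, ?_, ?_, ?_⟩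
    on_goal 22 => exact fun e he => absurd he List.not_mem_nil
    all_goals
      simp only [Apx.sm, List.getD_cons_zero, List.getD_cons_succ, Bool.false_eq_true, if_true, if_false]
      push_cast
      grind

end

noncomputable section

lemma sq_bd {x lo hi : ℝ} (h0 : 0 ≤ lo) (h1 : lo ^ 2 ≤ x) (h2 : x ≤ hi ^ 2) (h3 : 0 ≤ hi) :
    lo ≤ √x ∧ √x ≤ hi :=
  ⟨Real.le_sqrt_of_sq_le h1, (Real.sqrt_le_left h3).2 h2⟩

lemma ivt {f : ℝ → ℝ} (hf : Continuous f) {a b : ℝ} (hab : a ≤ b) (ha : f a ≤ 0) (hb : 0 ≤ f b) :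
    ∃ r, a ≤ r ∧ r ≤ b ∧ f r = 0 := by
  obtain ⟨r, hr, h⟩ := intermediate_value_Icc hab hf.continuousOn ⟨ha, hb⟩
  exact ⟨r, hr.1, hr.2, h⟩

lemma ex1 : ∃ r ∈ RatioSet, (637555 / 1000000 : ℝ) ≤ r ∧ r ≤ (637556 / 1000000 : ℝ) := by
  obtain ⟨r, r1, r2, hr⟩ := ivt (f := fun r : ℝ => r ^ 2 + 2 * r - 1 + r * √(r ^ 2 + 2 * r) - √(1 + 2 * r)) (by fun_prop)
    (a := (637555976 / 1000000000 : ℝ)) (b := (637555979 / 1000000000 : ℝ)) (by norm_num) (by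
      obtain ⟨t1, t2⟩ := sq_bd (x := (1 + 2 * (637555976 / 1000000000 : ℝ) : ℝ)) (lo := (150834742415 / 100000000000 : ℝ)) (hi := (150834742418 / 100000000000 : ℝ))
        (by norm_num) (by norm_num) (by norm_num) (by norm_num)
      obtain ⟨w1, w2⟩ := sq_bd (x := ((637555976 / 1000000000 : ℝ) ^ 2 + 2 * (637555976 / 1000000000 : ℝ) : ℝ)) (lo := (129676118638 / 100000000000 : ℝ)) (hi := (129676118641 / 100000000000 : ℝ))
        (by norm_num) (by norm_num) (by norm_num) (by norm_num)
      linarith) (by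
      obtain ⟨t1, t2⟩ := sq_bd (x := (1 + 2 * (637555979 / 1000000000 : ℝ) : ℝ)) (lo := (150834742614 / 100000000000 : ℝ)) (hi := (150834742617 / 100000000000 : ℝ))
        (by norm_num) (by norm_num) (by norm_num) (by norm_num)
      obtain ⟨w1, w2⟩ := sq_bd (x := ((637555979 / 1000000000 : ℝ) ^ 2 + 2 * (637555979 / 1000000000 : ℝ) : ℝ)) (lo := (129676119017 / 100000000000 : ℝ)) (hi := (129676119020 / 100000000000 : ℝ))
        (by norm_num) (by norm_num) (by norm_num) (by norm_num)
      linarith)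
  have r0 : 0 < r := by linarith
  obtain ⟨t1, t2⟩ := sq_bd (x := 1 + 2 * r) (lo := (1508347 / 1000000 : ℝ)) (hi := (1508348 / 1000000 : ℝ))
    (by norm_num) (by norm_num; linarith) (by norm_num; linarith) (by norm_num)
  obtain ⟨w1, w2⟩ := sq_bd (x := r ^ 2 + 2 * r) (lo := (1296761 / 1000000 : ℝ)) (hi := (1296762 / 1000000 : ℝ))
    (by norm_num) (by norm_num; nlinarith) (by norm_num; nlinarith) (by norm_num)
  exact ⟨r, real1 (t := √(1 + 2 * r)) (w := √(r ^ 2 + 2 * r)) (Real.sq_sqrt (by positivity)) (Real.sq_sqrt (by positivity)) (by linarith) (by linarith) (by linarith) (by linarith) (by linarith) (by linarith) (by linarith), by linarith, by linarith⟩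

lemma ex2 : ∃ r ∈ RatioSet, (545151 / 1000000 : ℝ) ≤ r ∧ r ≤ (545152 / 1000000 : ℝ) := by
  have hs : √(3 : ℝ) ^ 2 = 3 := Real.sq_sqrt (by norm_num)
  obtain ⟨s1, s2⟩ := sq_bd (x := (3 : ℝ)) (lo := (173205080755 / 100000000000 : ℝ)) (hi := (173205080758 / 100000000000 : ℝ))
    (by norm_num) (by norm_num) (by norm_num) (by norm_num)
  obtain ⟨r, r1, r2, hr⟩ := ivt (f := fun r : ℝ => 2 * (1 + r) ^ 2 - 4 + (1 + r) * (r * √3 - √(1 + 2 * r))) (by fun_prop)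
    (a := (545151041 / 1000000000 : ℝ)) (b := (545151044 / 1000000000 : ℝ)) (by norm_num) (by
      obtain ⟨t1, t2⟩ := sq_bd (x := (1 + 2 * (545151041 / 1000000000 : ℝ) : ℝ)) (lo := (144578770293 / 100000000000 : ℝ)) (hi := (144578770296 / 100000000000 : ℝ))
        (by norm_num) (by norm_num) (by norm_num) (by norm_num)
      linarith) (by
      obtain ⟨t1, t2⟩ := sq_bd (x := (1 + 2 * (545151044 / 1000000000 : ℝ) : ℝ)) (lo := (144578770501 / 100000000000 : ℝ)) (hi := (144578770504 / 100000000000 : ℝ))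
        (by norm_num) (by norm_num) (by norm_num) (by norm_num)
      linarith)
  have r0 : 0 < r := by linarith
  obtain ⟨t1, t2⟩ := sq_bd (x := 1 + 2 * r) (lo := (1445787 / 1000000 : ℝ)) (hi := (1445788 / 1000000 : ℝ))
    (by norm_num) (by norm_num; linarith) (by norm_num; linarith) (by norm_num)
  have ht : √(1 + 2 * r) ^ 2 = 1 + 2 * r := Real.sq_sqrt (by positivity)
  exact ⟨r, real2 (s := √3) (t := √(1 + 2 * r)) hs ht (by linear_combination hr + ht + (r ^ 2 / 3) * hs) (by linarith) (by linarith) (by linarith) (by linarith) (by linarith) (by linarith), by linarith, by linarith⟩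

lemma ex3 : ∃ r ∈ RatioSet, (533296 / 1000000 : ℝ) ≤ r ∧ r ≤ (533297 / 1000000 : ℝ) := by
  obtain ⟨r, r1, r2, hr⟩ := ivt (f := fun r : ℝ => 8 * r ^ 3 + 3 * r ^ 2 - 2 * r - 1) (by fun_prop)
    (a := (533296415 / 1000000000 : ℝ)) (b := (533296418 / 1000000000 : ℝ)) (by norm_num) (by
      norm_num) (by
      norm_num)
  have r0 : 0 < r := by linarith
  exact ⟨r, real3 (h' := (1 + 2 * r - r ^ 2) / (1 + r)) hr (by field_simp) (by field_simp; linear_combination (-1) * hr) (by linarith) (by linarith) (by rw [le_div_iff₀ (by positivity)]; nlinarith) (by rw [div_le_iff₀ (by positivity)]; nlinarith), by linarith, by linarith⟩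

lemma ex4 : ∃ r ∈ RatioSet, (414213 / 1000000 : ℝ) ≤ r ∧ r ≤ (414214 / 1000000 : ℝ) := by
  obtain ⟨r, r1, r2, hr⟩ := ivt (f := fun r : ℝ => (r + 1) ^ 2 - 2) (by fun_prop)
    (a := (414213561 / 1000000000 : ℝ)) (b := (414213564 / 1000000000 : ℝ)) (by norm_num) (by
      norm_num) (by
      norm_num)
  have r0 : 0 < r := by linarith
  exact ⟨r, real4 (by linarith) (by linarith) (by linarith), by linarith, by linarith⟩

lemma ex5 : ∃ r ∈ RatioSet, (386106 / 1000000 : ℝ) ≤ r ∧ r ≤ (386107 / 1000000 : ℝ) := by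
  have hs : √(3 : ℝ) ^ 2 = 3 := Real.sq_sqrt (by norm_num)
  obtain ⟨s1, s2⟩ := sq_bd (x := (3 : ℝ)) (lo := (173205080755 / 100000000000 : ℝ)) (hi := (173205080758 / 100000000000 : ℝ))
    (by norm_num) (by norm_num) (by norm_num) (by norm_num)
  obtain ⟨r, r1, r2, hr⟩ := ivt (f := fun r : ℝ => -(3 * r ^ 2 - (4 * √3 + 2) * r + 3)) (by fun_prop)
    (a := (386106103 / 1000000000 : ℝ)) (b := (386106106 / 1000000000 : ℝ)) (by norm_num) (by
      linarith) (by
      linarith)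
  have r0 : 0 < r := by linarith
  exact ⟨r, real5 (s := √3) hs (by linarith) (by linarith) (by linarith) (by linarith) (by linarith), by linarith, by linarith⟩

lemma ex6 : ∃ r ∈ RatioSet, (349198 / 1000000 : ℝ) ≤ r ∧ r ≤ (349199 / 1000000 : ℝ) := by
  have hs : √(3 : ℝ) ^ 2 = 3 := Real.sq_sqrt (by norm_num)
  obtain ⟨s1, s2⟩ := sq_bd (x := (3 : ℝ)) (lo := (173205080755 / 100000000000 : ℝ)) (hi := (173205080758 / 100000000000 : ℝ))
    (by norm_num) (by norm_num) (by norm_num) (by norm_num)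
  obtain ⟨r, r1, r2, hr⟩ := ivt (f := fun r : ℝ => r ^ 2 * (7 + 4 * √3) - 1 - 2 * r) (by fun_prop)
    (a := (349198185 / 1000000000 : ℝ)) (b := (349198188 / 1000000000 : ℝ)) (by norm_num) (by
      linarith) (by
      linarith)
  have r0 : 0 < r := by linarith
  exact ⟨r, real6 (s := √3) hs hr (by linarith) (by linarith) (by linarith) (by linarith), by linarith, by linarith⟩

lemma ex7 : ∃ r ∈ RatioSet, (280776 / 1000000 : ℝ) ≤ r ∧ r ≤ (280777 / 1000000 : ℝ) := by
  obtain ⟨r, r1, r2, hr⟩ := ivt (f := fun r : ℝ => 2 * r ^ 2 + 3 * r - 1) (by fun_prop)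
    (a := (280776405 / 1000000000 : ℝ)) (b := (280776408 / 1000000000 : ℝ)) (by norm_num) (by
      norm_num) (by
      norm_num)
  have r0 : 0 < r := by linarith
  obtain ⟨t1, t2⟩ := sq_bd (x := 1 + 2 * r) (lo := (1249621 / 1000000 : ℝ)) (hi := (1249622 / 1000000 : ℝ))
    (by norm_num) (by norm_num; linarith) (by norm_num; linarith) (by norm_num)
  exact ⟨r, real7 (p := √(1 + 2 * r)) hr (Real.sq_sqrt (by positivity)) (by linarith) (by linarith) (by linarith) (by linarith), by linarith, by linarith⟩

lemma ex8 : ∃ r ∈ RatioSet, (154700 / 1000000 : ℝ) ≤ r ∧ r ≤ (154701 / 1000000 : ℝ) := by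
  have hs : √(3 : ℝ) ^ 2 = 3 := Real.sq_sqrt (by norm_num)
  obtain ⟨s1, s2⟩ := sq_bd (x := (3 : ℝ)) (lo := (173205080755 / 100000000000 : ℝ)) (hi := (173205080758 / 100000000000 : ℝ))
    (by norm_num) (by norm_num) (by norm_num) (by norm_num)
  exact ⟨2 * √3 / 3 - 1, real8 (s := √3) hs rfl (by linarith) (by linarith) (by linarith) (by linarith),
    by linarith, by linarith⟩

lemma ex9 : ∃ r ∈ RatioSet, (101020 / 1000000 : ℝ) ≤ r ∧ r ≤ (101021 / 1000000 : ℝ) := by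
  have hs : √(3 : ℝ) ^ 2 = 3 := Real.sq_sqrt (by norm_num)
  obtain ⟨s1, s2⟩ := sq_bd (x := (3 : ℝ)) (lo := (173205080755 / 100000000000 : ℝ)) (hi := (173205080758 / 100000000000 : ℝ))
    (by norm_num) (by norm_num) (by norm_num) (by norm_num)
  obtain ⟨r, r1, r2, hr⟩ := ivt (f := fun r : ℝ => -(r ^ 2 - 10 * r + 1)) (by fun_prop)
    (a := (101020513 / 1000000000 : ℝ)) (b := (101020516 / 1000000000 : ℝ)) (by norm_num) (by
      norm_num) (by
      norm_num)
  have r0 : 0 < r := by linarith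
  exact ⟨r, real9 (s := √3) hs (by linarith) (by linarith) (by linarith) (by linarith) (by linarith), by linarith, by linarith⟩

theorem ratioSet_ge : 9 ≤ RatioSet.ncard := by
  obtain ⟨r1, m1, l1, u1⟩ := ex1
  obtain ⟨r2, m2, l2, u2⟩ := ex2
  obtain ⟨r3, m3, l3, u3⟩ := ex3
  obtain ⟨r4, m4, l4, u4⟩ := ex4
  obtain ⟨r5, m5, l5, u5⟩ := ex5
  obtain ⟨r6, m6, l6, u6⟩ := ex6
  obtain ⟨r7, m7, l7, u7⟩ := ex7
  obtain ⟨r8, m8, l8, u8⟩ := ex8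
  obtain ⟨r9, m9, l9, u9⟩ := ex9
  have hmono : StrictMono ![r9, r8, r7, r6, r5, r4, r3, r2, r1] := by
    rw [Fin.strictMono_iff_lt_succ]
    intro i
    fin_cases i <;> simp <;> linarith
  have hsub : Set.range ![r9, r8, r7, r6, r5, r4, r3, r2, r1] ⊆ RatioSet := by
    rintro _ ⟨i, rfl⟩
    fin_cases i <;> simp <;> assumption
  have h1 := Set.ncard_le_ncard hsub ratioSet_le.1
  rw [← Set.image_univ, Set.ncard_image_of_injective _ hmono.injective, Set.ncard_univ] at h1
  simpa using h1

end

/-- there are exactly 9 values of `r` with `0 < r < 1` allowing a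
compact packing by disks of radii `1` and `r` using both radii. -/
theorem nine_binary_compact_ratios :
    {r : ℝ | 0 < r ∧ r < 1 ∧
      ∃ P : Set Disk, IsCompactPacking P ∧ RadiiIn P {1, r} ∧
        UsesRadius P 1 ∧ UsesRadius P r}.ncard = 9 := by
  exact le_antisymm ratioSet_le.2 ratioSet_ge
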